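/- arXiv:2403.07410 — 10 statements merged into one kernel-verified Lean document; each statement's English description precedes it below -/
import Mathlib

section
/- Let M be a finite set with |M| ≥ 32, let c ≥ 1 be a real number, and let J be a job set over M with |J| ≤ |M|^c. Let L and l be positive integers with L ≤ 2·|M|^c and l ≥ 150·c·ln|M| / ln ln|M|. Then for every positive integer s, the number of bad patterns for (J, L, l) of size s is at most 2·exp(|J|·ln(l)/8)·(e·C(J)/l)^s. -/
open Finset

/-- The congestion of the job set given by the finite type `J` with machine sequences
`seq : J → List M`: the maximum over machines `m` of the total number of pairs `(j,i)`
with `seq(j)_i = m`. -/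
def congestion {M J : Type*} [Fintype M] [DecidableEq M] [Fintype J]
    (seq : J → List M) : ℕ :=
  Finset.univ.sup fun m : M => ∑ j : J, (seq j).count m

/-- A bad pattern for the job set given by the finite type `J` with machine sequences
`seq : J → List M`, with parameters `L` and `l`. -/
def IsBadPattern {M J : Type*} [Fintype M] [Fintype J] (seq : J → List M)
    (L l : ℕ) (B : Fin (2 * L) → M → Finset (J × ℕ)) : Prop :=
  (∀ T m, ∀ p ∈ B T m, (seq p.1)[p.2]? = some m) ∧
  (∀ T m T' m', ∀ p ∈ B T m, ∀ p' ∈ B T' m', p.1 = p'.1 → T = T' ∧ m = m' ∧ p = p') ∧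
  (∀ T m, B T m = ∅ ∨ l < (B T m).card) ∧
  Fintype.card J < 2 * ∑ T, ∑ m, (B T m).card

theorem cbp_count {M : Type*} [DecidableEq M] (m : M) (u : List M) :
    ((Finset.range u.length).filter fun i => u[i]? = some m).card = u.count m := by
  induction u using List.reverseRecOn with
  | nil => simp
  | append_singleton u a ih =>
    rw [List.length_append, List.length_singleton, Finset.range_add_one, Finset.filter_insert,
      List.count_append, ← ih]
    have h1 : ((Finset.range u.length).filter fun i => (u ++ [a])[i]? = some m)
        = ((Finset.range u.length).filter fun i => u[i]? = some m) := by
      apply Finset.filter_congr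
      intro i hi
      rw [List.getElem?_append_left (Finset.mem_range.1 hi)]
    rw [h1]
    by_cases h : a = m
    · simp [h]
    · simp [h]

open Classical in
theorem cbp_pairs {M J : Type*} [Fintype M] [DecidableEq M] [Fintype J] (seq : J → List M) (m : M) :
    ∃ P : Finset (J × ℕ), P.card ≤ congestion seq ∧
      ∀ p : J × ℕ, (seq p.1)[p.2]? = some m → p ∈ P := by
  refine ⟨Finset.univ.biUnion fun j : J =>
    ((Finset.range (seq j).length).filter fun i => (seq j)[i]? = some m).image fun i => (j, i),
    ?_, ?_⟩
  · refine Finset.card_biUnion_le.trans (le_trans ?_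
      (Finset.le_sup (f := fun m : M => ∑ j : J, (seq j).count m) (Finset.mem_univ m)))
    refine Finset.sum_le_sum fun j _ => ?_
    refine Finset.card_image_le.trans ?_
    rw [cbp_count]
  · rintro ⟨j, i⟩ h
    simp only [Finset.mem_biUnion, Finset.mem_univ, true_and, Finset.mem_image, Finset.mem_filter,
      Finset.mem_range]
    exact ⟨j, i, ⟨(List.getElem?_eq_some_iff.1 h).1, h⟩, rfl⟩

theorem cbp_size {M J : Type*} [Fintype M] [Fintype J] (seq : J → List M)
    (L l : ℕ) (B : Fin (2 * L) → M → Finset (J × ℕ)) (hB : IsBadPattern seq L l B) :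
    ∑ T, ∑ m, (B T m).card ≤ Fintype.card J := by
  have h : ∑ T, ∑ m, (B T m).card
      = (Finset.univ.sigma fun x : Fin (2 * L) × M => B x.1 x.2).card := by
    rw [Finset.card_sigma, Fintype.sum_prod_type]
  rw [h]
  refine Finset.card_le_card_of_injOn (fun x => x.2.1) (fun _ _ => Finset.mem_univ _) ?_
  rintro ⟨⟨T, m⟩, p⟩ hp ⟨⟨T', m'⟩, p'⟩ hp' heq
  simp only [Finset.coe_sigma, Set.mem_sigma_iff, Finset.mem_coe, Finset.mem_univ, true_and] at hp hp'
  obtain ⟨rfl, rfl, rfl⟩ := hB.2.1 T m T' m' p hp p' hp' heq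
  rfl

/-- The weighted sum over a single family. -/
theorem cbp_weight {α : Type*} (P : Finset α) (C l N : ℕ) (hP : P.card ≤ C) (hC : 0 < C) (hl : 0 < l)
    (y : ℝ) (hy : 0 < y) (hy1 : y ≤ 1) :
    ∑ A ∈ P.powerset.filter (fun A => A.card = 0 ∨ (l < A.card ∧ A.card ≤ N)),
      (l * y / (Real.exp 1 * C)) ^ A.card ≤ 1 + N * y ^ l := by
  set w : ℝ := l * y / (Real.exp 1 * C) with hw
  have hw0 : 0 < w := by positivity
  have hterm : ∀ k ∈ Finset.Ioc l N, (P.card.choose k : ℝ) * w ^ k ≤ y ^ l := by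
    intro k hk
    rw [Finset.mem_Ioc] at hk
    have hk0 : 0 < k := by omega
    have h1 : (P.card.choose k : ℝ) ≤ (C : ℝ) ^ k / k.factorial := by
      refine (Nat.choose_le_pow_div k P.card).trans ?_
      gcongr
    have h2 : (k : ℝ) ^ k / k.factorial ≤ Real.exp 1 ^ k := by
      have := Real.pow_div_factorial_le_exp (k : ℝ) (by positivity) k
      rwa [← Real.exp_one_pow] at this
    have hlk : (l : ℝ) ≤ k := by exact_mod_cast hk.1.le
    calc (P.card.choose k : ℝ) * w ^ k ≤ (C : ℝ) ^ k / k.factorial * w ^ k := by gcongr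
      _ = (l : ℝ) ^ k / k.factorial / Real.exp 1 ^ k * y ^ k := by
        rw [hw, div_pow, mul_pow, mul_pow]; field_simp
      _ ≤ (k : ℝ) ^ k / k.factorial / Real.exp 1 ^ k * y ^ k := by gcongr
      _ ≤ 1 * y ^ k := by
        gcongr
        rw [div_le_one (by positivity)]; exact h2
      _ ≤ y ^ l := by
        rw [one_mul]; exact pow_le_pow_of_le_one hy.le hy1 hk.1.le
  calc _ = ∑ A ∈ P.powerset, (fun k => if k = 0 ∨ (l < k ∧ k ≤ N) then w ^ k else 0) A.card := by
        rw [Finset.sum_filter]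
    _ = ∑ k ∈ Finset.range (P.card + 1), P.card.choose k •
          (fun k => if k = 0 ∨ (l < k ∧ k ≤ N) then w ^ k else 0) k := by
        exact Finset.sum_powerset_apply_card
          (fun k => if k = 0 ∨ (l < k ∧ k ≤ N) then w ^ k else (0 : ℝ))
    _ ≤ ∑ k ∈ insert 0 (Finset.Ioc l N), (P.card.choose k : ℝ) * w ^ k := by
        simp only [nsmul_eq_mul, mul_ite, mul_zero]
        rw [← Finset.sum_filter]
        refine Finset.sum_le_sum_of_subset_of_nonneg ?_ (fun _ _ _ => by positivity)
        intro k hk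
        simp only [Finset.mem_filter, Finset.mem_insert, Finset.mem_Ioc] at hk ⊢
        exact hk.2
    _ = 1 + ∑ k ∈ Finset.Ioc l N, (P.card.choose k : ℝ) * w ^ k := by
        rw [Finset.sum_insert (by simp)]; simp
    _ ≤ 1 + ∑ k ∈ Finset.Ioc l N, y ^ l := by
        gcongr with k hk; exact hterm k hk
    _ ≤ 1 + N * y ^ l := by
        rw [Finset.sum_const, nsmul_eq_mul, Nat.card_Ioc]
        gcongr
        exact Nat.sub_le _ _

theorem cbp_analytic (n N L l : ℕ) (c : ℝ) (hc : 1 ≤ c) (hM : 32 ≤ n)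
    (hJ : (N : ℝ) ≤ (n : ℝ) ^ c) (hl0 : 0 < l)
    (hL : (L : ℝ) ≤ 2 * (n : ℝ) ^ c)
    (hl : 150 * c * Real.log n / Real.log (Real.log n) ≤ (l : ℝ)) :
    (2 * L * n : ℝ) * (N * Real.exp (-(Real.log l / 8)) ^ l) ≤ 1 / 2 := by
  have hn : (32 : ℝ) ≤ n := by exact_mod_cast hM
  have hn0 : (0 : ℝ) < n := by linarith
  have hlog : Real.exp 1 < Real.log n := by
    have h2 := Real.log_two_gt_d9
    have h3 := Real.exp_one_lt_d9
    have : Real.log 32 = 5 * Real.log 2 := by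
      rw [show (32 : ℝ) = 2 ^ 5 by norm_num, Real.log_pow]; norm_num
    have := Real.log_le_log (by norm_num) hn
    linarith
  set z := Real.log n with hz
  have hz0 : 0 < z := (Real.exp_pos 1).trans hlog
  have hx : 1 < Real.log z := by
    rw [Real.lt_log_iff_exp_lt hz0]; exact hlog
  set x := Real.log z with hxd
  have hzx : Real.exp x = z := Real.exp_log hz0
  have hl1 : 150 * c * z ≤ l * x := by
    rwa [div_le_iff₀ (by linarith)] at hl
  have hlR : (0 : ℝ) < l := by exact_mod_cast hl0
  have hlx : x / 2 ≤ Real.log l := by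
    rw [Real.le_log_iff_exp_le hlR]
    have h1 : Real.exp (x / 2) * Real.exp (x / 2) = z := by
      rw [← Real.exp_add, add_halves, hzx]
    have h2 : x / 2 + 1 ≤ Real.exp (x / 2) := Real.add_one_le_exp _
    have h3 : 150 * z ≤ l * x := by nlinarith
    have h4 : l * x ≤ l * (2 * Real.exp (x / 2)) := by gcongr; linarith
    have h5 : 0 < Real.exp (x / 2) := Real.exp_pos _
    have h6 : Real.exp (x / 2) * Real.exp (x / 2) ≤ l * Real.exp (x / 2) := by nlinarith
    exact le_of_mul_le_mul_right h6 h5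
  have hmain : 4 * (c * z) ≤ l * (Real.log l / 8) := by
    have : l * (x / 2) ≤ l * Real.log l := by gcongr
    nlinarith [mul_pos (by linarith : (0:ℝ) < c) hz0]
  set X : ℝ := (n : ℝ) ^ c with hX
  have hXe : X = Real.exp (c * z) := by
    rw [hX, Real.rpow_def_of_pos hn0, mul_comm]
  have hnX : (n : ℝ) ≤ X := by
    have := Real.rpow_le_rpow_of_exponent_le (by linarith : (1 : ℝ) ≤ n) hc
    rwa [Real.rpow_one] at this
  have hX0 : 0 < X := by linarith
  have hy : Real.exp (-(Real.log l / 8)) ^ l ≤ 1 / X ^ 4 := by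
    rw [← Real.exp_nat_mul, hXe, ← Real.exp_nat_mul, one_div, ← Real.exp_neg, Real.exp_le_exp]
    push_cast
    linarith
  calc (2 * L * n : ℝ) * (N * Real.exp (-(Real.log l / 8)) ^ l)
      ≤ (2 * (2 * X) * X) * (X * (1 / X ^ 4)) := by gcongr
    _ = 4 / X := by field_simp; norm_num
    _ ≤ 1 / 2 := by rw [div_le_div_iff₀ hX0 (by norm_num)]; linarith

theorem cbp_gen {ι M α : Type*} [Fintype ι] [Fintype M] [DecidableEq ι] [DecidableEq M]
    (F : M → Finset (Finset α)) (s : ℕ) (w a : ℝ) (hw : 0 < w)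
    (h : ∀ m, ∑ A ∈ F m, w ^ A.card ≤ 1 + a) :
    ((((Fintype.piFinset fun _ : ι => Fintype.piFinset fun m => F m).filter
      (fun B => ∑ T, ∑ m, (B T m).card = s)).card : ℕ) : ℝ) * w ^ s ≤
      Real.exp ((Fintype.card ι * Fintype.card M : ℝ) * a) := by
  have hF0 : ∀ m, 0 ≤ ∑ A ∈ F m, w ^ A.card :=
    fun m => Finset.sum_nonneg fun _ _ => (pow_pos hw _).le
  set H := (Fintype.piFinset fun _ : ι => Fintype.piFinset fun m => F m) with hH
  calc _ = ∑ B ∈ H.filter (fun B => ∑ T, ∑ m, (B T m).card = s),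
        ∏ T, ∏ m, w ^ (B T m).card := by
        rw [← nsmul_eq_mul, ← Finset.sum_const]
        refine Finset.sum_congr rfl fun B hB => ?_
        rw [← (Finset.mem_filter.1 hB).2]
        simp only [Finset.prod_pow_eq_pow_sum]
    _ ≤ ∑ B ∈ H, ∏ T : ι, ∏ m, w ^ (B T m).card :=
        Finset.sum_le_sum_of_subset_of_nonneg (Finset.filter_subset _ _)
          (fun _ _ _ => Finset.prod_nonneg fun _ _ => Finset.prod_nonneg fun _ _ =>
            (pow_pos hw _).le)
    _ = ∏ _T : ι, ∏ m, ∑ A ∈ F m, w ^ A.card := by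
        rw [hH, ← Finset.prod_univ_sum (fun _ : ι => Fintype.piFinset fun m => F m)
          (fun _ b => ∏ m, w ^ (b m).card)]
        refine Finset.prod_congr rfl fun T _ => ?_
        rw [Finset.prod_univ_sum]
    _ ≤ ∏ _T : ι, ∏ _m : M, Real.exp a := by
        refine Finset.prod_le_prod (fun _ _ => Finset.prod_nonneg fun m _ => hF0 m) fun T _ => ?_
        refine Finset.prod_le_prod (fun m _ => hF0 m) fun m _ => (h m).trans ?_
        rw [add_comm]; exact Real.add_one_le_exp _
    _ = _ := by
        rw [Finset.prod_const, Finset.prod_const, Finset.card_univ, Finset.card_univ,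
          ← Real.exp_nat_mul, ← Real.exp_nat_mul]
        congr 1; ring

set_option maxHeartbeats 1000000 in
/-- If `|M| ≥ 32`, `c ≥ 1`, `|J| ≤ |M|^c`, `L ≤ 2·|M|^c` and
`l ≥ 150·c·ln|M| / ln ln|M|`, then for every positive integer `s` the number of bad
patterns for `(J, L, l)` of size `s` is at most `2·exp(|J|·ln(l)/8)·(e·C(J)/l)^s`. -/
theorem count_badPatterns_le {M J : Type*} [Fintype M] [DecidableEq M] [Fintype J]
    (seq : J → List M) (c : ℝ) (hc : 1 ≤ c) (hM : 32 ≤ Fintype.card M)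
    (hJ : (Fintype.card J : ℝ) ≤ (Fintype.card M : ℝ) ^ c)
    (L l : ℕ) (hL0 : 0 < L) (hl0 : 0 < l)
    (hL : (L : ℝ) ≤ 2 * (Fintype.card M : ℝ) ^ c)
    (hl : 150 * c * Real.log (Fintype.card M) / Real.log (Real.log (Fintype.card M)) ≤ (l : ℝ))
    (s : ℕ) (hs : 0 < s) :
    (Nat.card {B : Fin (2 * L) → M → Finset (J × ℕ) //
        IsBadPattern seq L l B ∧ ∑ T, ∑ m, (B T m).card = s} : ℝ) ≤
      2 * Real.exp ((Fintype.card J : ℝ) * Real.log l / 8) *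
        (Real.exp 1 * (congestion seq : ℝ) / (l : ℝ)) ^ s := by
  classical
  set N := Fintype.card J with hN
  set C := congestion seq with hCdef
  choose P hPc hP using cbp_pairs seq
  have hlR : (1 : ℝ) ≤ l := by exact_mod_cast hl0
  have hlog : 0 ≤ Real.log l := Real.log_nonneg hlR
  set F : M → Finset (Finset (J × ℕ)) := fun m =>
    (P m).powerset.filter (fun A => A.card = 0 ∨ (l < A.card ∧ A.card ≤ N)) with hF
  set G : Finset (Fin (2 * L) → M → Finset (J × ℕ)) :=
    (Fintype.piFinset fun _ => Fintype.piFinset fun m => F m).filter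
      (fun B => ∑ T, ∑ m, (B T m).card = s) with hG
  have hle : ∀ B : Fin (2 * L) → M → Finset (J × ℕ), IsBadPattern seq L l B →
      ∀ T m, (B T m).card ≤ N := by
    intro B hB T m
    refine le_trans ?_ (cbp_size seq L l B hB)
    exact (Finset.single_le_sum (f := fun m => (B T m).card) (fun _ _ => Nat.zero_le _)
      (Finset.mem_univ m)).trans (Finset.single_le_sum (f := fun T => ∑ m, (B T m).card)
        (fun _ _ => Nat.zero_le _) (Finset.mem_univ T))
  have hsub : ∀ B : Fin (2 * L) → M → Finset (J × ℕ),
      (IsBadPattern seq L l B ∧ ∑ T, ∑ m, (B T m).card = s) → B ∈ G := by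
    rintro B ⟨hB, hBs⟩
    simp only [hG, hF, Finset.mem_filter, Fintype.mem_piFinset, Finset.mem_powerset]
    refine ⟨fun T m => ⟨fun p hp => hP m p (hB.1 T m p hp), ?_⟩, hBs⟩
    rcases hB.2.2.1 T m with h | h
    · left; simp [h]
    · right; exact ⟨h, hle B hB T m⟩
  have hcard : Nat.card {B : Fin (2 * L) → M → Finset (J × ℕ) //
        IsBadPattern seq L l B ∧ ∑ T, ∑ m, (B T m).card = s} ≤ G.card := by
    have := Nat.card_le_card_of_injective
      (fun B : {B : Fin (2 * L) → M → Finset (J × ℕ) //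
        IsBadPattern seq L l B ∧ ∑ T, ∑ m, (B T m).card = s} => (⟨B.1, hsub B.1 B.2⟩ : G))
      (fun a b h => Subtype.ext (by simpa using h))
    simpa using this
  by_cases hempty : IsEmpty {B : Fin (2 * L) → M → Finset (J × ℕ) //
        IsBadPattern seq L l B ∧ ∑ T, ∑ m, (B T m).card = s}
  · rw [Nat.card_of_isEmpty]
    push_cast
    positivity
  obtain ⟨B0, hB0, hB0s⟩ := not_isEmpty_iff.1 hempty
  have hsN : s ≤ N := hB0s ▸ cbp_size seq L l B0 hB0
  have hC : 0 < C := by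
    by_contra hC0
    have hz : ∀ T m, (B0 T m).card = 0 := by
      intro T m
      have : B0 T m ⊆ P m := fun p hp => hP m p (hB0.1 T m p hp)
      have := Finset.card_le_card this
      have := hPc m
      omega
    simp [hz] at hB0s
    omega
  have hCR : (0 : ℝ) < C := by exact_mod_cast hC
  set y : ℝ := Real.exp (-(Real.log l / 8)) with hy
  have hy0 : 0 < y := Real.exp_pos _
  have hy1 : y ≤ 1 := by rw [hy, Real.exp_le_one_iff]; linarith
  set w : ℝ := l * y / (Real.exp 1 * C) with hw
  have hw0 : 0 < w := by positivity
  have hsum : (G.card : ℝ) * w ^ s ≤ 2 := by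
    have h1 := cbp_gen (ι := Fin (2 * L)) F s w (N * y ^ l) hw0
      (fun m => cbp_weight (P m) C l N (hPc m) hC hl0 y hy0 hy1)
    refine h1.trans ?_
    have h2 := cbp_analytic (Fintype.card M) N L l c hc hM hJ hl0 hL hl
    have h3 := Real.log_two_gt_d9
    rw [← Real.le_log_iff_exp_le (by norm_num)]
    rw [Fintype.card_fin]
    push_cast
    linarith
  have hcardR : (Nat.card {B : Fin (2 * L) → M → Finset (J × ℕ) //
        IsBadPattern seq L l B ∧ ∑ T, ∑ m, (B T m).card = s} : ℝ) ≤ G.card := by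
    exact_mod_cast hcard
  refine hcardR.trans ?_
  clear hcardR hcard hsub
  generalize (G.card : ℝ) = g at hsum ⊢
  have hwinv : w⁻¹ = Real.exp (Real.log l / 8) * (Real.exp 1 * C / l) := by
    rw [hw, hy, Real.exp_neg]; field_simp
  calc g = (g * w ^ s) * w⁻¹ ^ s := by
        rw [inv_pow, mul_assoc, mul_inv_cancel₀ (by positivity), mul_one]
    _ ≤ 2 * w⁻¹ ^ s := by gcongr
    _ = 2 * Real.exp (s * (Real.log l / 8)) * (Real.exp 1 * C / l) ^ s := by
        rw [hwinv, mul_pow, ← Real.exp_nat_mul, mul_assoc]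
    _ ≤ _ := by
        have : (s : ℝ) ≤ N := by exact_mod_cast hsN
        rw [mul_div_assoc (N : ℝ)]
        gcongr
end

section
/- Let M be a finite set with |M| ≥ 32, let c ≥ 1 be a real number, let n be a positive integer with n ≤ |M|^c, and let L and l be positive integers with L ≤ 2·|M|^c and l ≥ 150·c·ln|M| / ln ln|M|. Then for every integer s with 1 ≤ s ≤ n, Σ_{k=1}^{⌊s/l⌋} binom(2·L·|M|, k)·binom(s+k, k) ≤ 2·exp(n·ln(l)/8). (An empty sum, when s < l, equals 0.) -/
open Finset

lemma aux_choose (s k : ℕ) : Nat.choose (s + k) k ≤ (s + 1) ^ k := by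
  induction k with
  | zero => simp
  | succ k ih =>
    have h := Nat.add_one_mul_choose_eq (s + k) k
    have h2 : s + k + 1 ≤ (s + 1) * (k + 1) := by nlinarith [Nat.zero_le (s * k)]
    have h3 : Nat.choose (s + k + 1) (k + 1) * (k + 1) ≤ (s + 1) ^ (k + 1) * (k + 1) := by
      rw [← h]
      calc _ ≤ ((s + 1) * (k + 1)) * (s + 1) ^ k := Nat.mul_le_mul h2 ih
        _ = _ := by ring
    exact Nat.le_of_mul_le_mul_right h3 (Nat.succ_pos k)

lemma aux_geom (A : ℝ) (hA : 2 ≤ A) (K : ℕ) : ∑ k ∈ Finset.Icc 1 K, A ^ k ≤ 2 * A ^ K := by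
  induction K with
  | zero => simp
  | succ K ih =>
    rw [Finset.sum_Icc_succ_top (by omega)]
    have : 0 < A ^ K := by positivity
    have h : A ^ (K + 1) = A ^ K * A := pow_succ _ _
    nlinarith

lemma aux_log (x c l : ℝ) (hx : 1 < x) (hc : 1 ≤ c) (hl : 150 * c * x / Real.log x ≤ l) :
    0 < l ∧ 32 * c * x ≤ l * Real.log l := by
  have hlx : 0 < Real.log x := Real.log_pos hx
  have hx0 : 0 < x := by linarith
  have hq : 0 < √x := Real.sqrt_pos.2 hx0
  have h1 : Real.log √x ≤ √x - 1 := Real.log_le_sub_one_of_pos hq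
  have h2 : Real.log √x = Real.log x / 2 := Real.log_sqrt hx0.le
  have hsq : √x * √x = x := Real.mul_self_sqrt hx0.le
  have h3 : √x ≤ 150 * c * x / Real.log x := by
    rw [le_div_iff₀ hlx]
    have : √x * Real.log x ≤ √x * (2 * √x) := by gcongr; linarith
    nlinarith
  have h4 : Real.log √x ≤ Real.log l := Real.log_le_log hq (h3.trans hl)
  have hl0 : 0 < l := by linarith
  refine ⟨hl0, ?_⟩
  rw [div_le_iff₀ hlx] at hl
  have h5 : l * (Real.log x / 2) ≤ l * Real.log l := by gcongr; linarith
  have : 0 < c * x := by positivity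
  nlinarith

/-- Let `|M| ≥ 32`, `c ≥ 1`, `n ≤ |M|^c` a positive integer, and `L, l` positive integers
with `L ≤ 2·|M|^c` and `l ≥ 150·c·ln|M| / ln ln|M|`. Then for every integer `s` with
`1 ≤ s ≤ n`, `Σ_{k=1}^{⌊s/l⌋} binom(2·L·|M|, k)·binom(s+k, k) ≤ 2·exp(n·ln(l)/8)`. -/
theorem sum_sizes_badPattern_le {M : Type*} [Fintype M]
    (c : ℝ) (hc : 1 ≤ c) (hM : 32 ≤ Fintype.card M)
    (n : ℕ) (hn : 0 < n) (hnM : (n : ℝ) ≤ (Fintype.card M : ℝ) ^ c)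
    (L l : ℕ) (hL0 : 0 < L) (hl0 : 0 < l)
    (hL : (L : ℝ) ≤ 2 * (Fintype.card M : ℝ) ^ c)
    (hl : 150 * c * Real.log (Fintype.card M) / Real.log (Real.log (Fintype.card M)) ≤ (l : ℝ))
    (s : ℕ) (hs1 : 1 ≤ s) (hsn : s ≤ n) :
    ((∑ k ∈ Finset.Icc 1 (s / l),
        Nat.choose (2 * L * Fintype.card M) k * Nat.choose (s + k) k : ℕ) : ℝ) ≤
      2 * Real.exp ((n : ℝ) * Real.log l / 8) := by
  set m : ℕ := Fintype.card M with hm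
  have hmR : (32 : ℝ) ≤ m := by exact_mod_cast hM
  have hm0 : (0 : ℝ) < m := by linarith
  have hx : 1 < Real.log m := by
    rw [Real.lt_log_iff_exp_lt hm0]
    linarith [Real.exp_one_lt_d9]
  obtain ⟨hlpos, hkey⟩ := aux_log _ c l hx hc hl
  set A : ℝ := (m : ℝ) ^ (4 * c) with hA
  have hP1 : (m : ℝ) ≤ (m : ℝ) ^ c := by
    simpa using Real.rpow_le_rpow_of_exponent_le (by linarith : (1 : ℝ) ≤ m) hc
  set P : ℝ := (m : ℝ) ^ c with hP
  have hAP : A = P ^ 4 := by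
    rw [hA, hP, mul_comm, Real.rpow_mul hm0.le]
    norm_cast
  have hP0 : 0 < P := by linarith
  have hA2 : 2 ≤ A := by
    rw [hAP]
    calc (2 : ℝ) ≤ P := by linarith
      _ ≤ P ^ 4 := le_self_pow₀ (by linarith) (by norm_num)
  have hbase : (2 * L * m : ℝ) * (s + 1) ≤ A := by
    have hs : (s : ℝ) + 1 ≤ 2 * P := by
      have : (s : ℝ) ≤ n := by exact_mod_cast hsn
      linarith
    calc (2 * L * m : ℝ) * (s + 1) ≤ (2 * (2 * P) * P) * (2 * P) := by gcongr
      _ = 8 * P ^ 3 := by ring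
      _ ≤ P * P ^ 3 := by gcongr; linarith
      _ = A := by rw [hAP]; ring
  have hterm : ∀ k, ((Nat.choose (2 * L * m) k * Nat.choose (s + k) k : ℕ) : ℝ) ≤ A ^ k := by
    intro k
    have h1 : Nat.choose (2 * L * m) k * Nat.choose (s + k) k ≤
        (2 * L * m) ^ k * (s + 1) ^ k := Nat.mul_le_mul (Nat.choose_le_pow _ _) (aux_choose s k)
    calc ((Nat.choose (2 * L * m) k * Nat.choose (s + k) k : ℕ) : ℝ)
        ≤ (((2 * L * m) ^ k * (s + 1) ^ k : ℕ) : ℝ) := by exact_mod_cast h1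
      _ = ((2 * L * m : ℝ) * (s + 1)) ^ k := by push_cast; rw [mul_pow (2 * L * m : ℝ)]
      _ ≤ A ^ k := by gcongr
  have hfin : A ^ (s / l) ≤ Real.exp ((n : ℝ) * Real.log l / 8) := by
    have hAe : A = Real.exp (Real.log m * (4 * c)) := Real.rpow_def_of_pos hm0 _
    rw [hAe, ← Real.exp_nat_mul]
    apply Real.exp_le_exp.2
    have hK : ((s / l : ℕ) : ℝ) * l ≤ n := by
      exact_mod_cast (Nat.div_mul_le_self s l).trans hsn
    have hll : 0 ≤ Real.log l := Real.log_natCast_nonneg l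
    have a1 : ((s / l : ℕ) : ℝ) * (32 * c * Real.log m) ≤ (s / l : ℕ) * (l * Real.log l) := by
      gcongr
    have a2 : (((s / l : ℕ) : ℝ) * l) * Real.log l ≤ n * Real.log l := by gcongr
    linarith
  rw [Nat.cast_sum]
  calc _ ≤ ∑ k ∈ Finset.Icc 1 (s / l), A ^ k := Finset.sum_le_sum fun k _ => hterm k
    _ ≤ 2 * A ^ (s / l) := aux_geom A hA2 _
    _ ≤ _ := by gcongr
end

section
/- Let n ≥ 1 be an integer and let C, L, l be real numbers with 1 ≤ C ≤ L and l ≥ 150. Then Σ_{s=⌈n/2⌉}^{n} 2·exp(n·ln(l)/8)·(e·C/l)^s·L^(−s) ≤ exp(−n·ln(l)/8). -/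
open Finset

/-- Let `n ≥ 1` be an integer and `C, L, l` real numbers with `1 ≤ C ≤ L` and `l ≥ 150`.
Then `Σ_{s=⌈n/2⌉}^{n} 2·exp(n·ln(l)/8)·(e·C/l)^s·L^(−s) ≤ exp(−n·ln(l)/8)`. -/
theorem sum_badPattern_prob_le (n : ℕ) (hn : 1 ≤ n) (C L l : ℝ)
    (hC : 1 ≤ C) (hCL : C ≤ L) (hl : 150 ≤ l) :
    ∑ s ∈ Finset.Icc ⌈(n : ℝ) / 2⌉₊ n,
        2 * Real.exp ((n : ℝ) * Real.log l / 8) * (Real.exp 1 * C / l) ^ s * L ^ (-(s : ℤ)) ≤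
      Real.exp (-((n : ℝ) * Real.log l) / 8) := by
  have hl0 : 0 < l := by linarith
  have hL0 : 0 < L := by linarith
  have he : Real.exp 1 ≤ 3 := by linarith [Real.exp_one_lt_d9]
  have he0 : 0 < Real.exp 1 := Real.exp_pos 1
  set m := ⌈(n : ℝ) / 2⌉₊ with hm
  set E := Real.exp ((n : ℝ) * Real.log l / 8) with hE
  have hE0 : 0 < E := Real.exp_pos _
  have hnm : (n : ℝ) / 2 ≤ m := Nat.le_ceil _
  have hm1 : 1 ≤ m := by
    rw [hm]
    apply Nat.succ_le_of_lt
    apply Nat.ceil_pos.mpr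
    have : (1 : ℝ) ≤ n := by exact_mod_cast hn
    linarith
  set q := Real.exp 1 / l with hq
  have hq0 : 0 < q := by positivity
  have hq1 : q ≤ 1 / 50 := by
    rw [hq, div_le_iff₀ hl0]; linarith
  have hlog : 0 ≤ Real.log l := Real.log_nonneg (by linarith)
  have hterm : ∀ s ∈ Finset.Icc m n,
      2 * E * (Real.exp 1 * C / l) ^ s * L ^ (-(s : ℤ)) ≤ 2 * E * q ^ s := by
    intro s _
    have h1 : (Real.exp 1 * C / l) ^ s * L ^ (-(s : ℤ)) = (q * (C / L)) ^ s := by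
      rw [zpow_neg, zpow_natCast, ← inv_pow, ← mul_pow]
      congr 1
      rw [hq]; field_simp
    rw [mul_assoc, h1]
    have h2 : C / L ≤ 1 := (div_le_one hL0).mpr hCL
    have h3 : 0 ≤ C / L := by positivity
    gcongr
    nlinarith
  have hgeom : ∑ s ∈ Finset.Icc m n, q ^ s ≤ q ^ m / (1 - q) := by
    have h := geom_sum_Ico_le_of_lt_one (m := m) (n := n + 1) hq0.le (by linarith : q < 1)
    have h2 : Finset.Icc m n = Finset.Ico m (n + 1) := by
      ext x; simp only [Finset.mem_Icc, Finset.mem_Ico]; omega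
    rwa [h2]
  have hE2 : E * E ≤ (Real.sqrt l) ^ m := by
    have h1 : Real.sqrt l = Real.exp (Real.log l / 2) := by
      rw [← Real.log_sqrt hl0.le, Real.exp_log (Real.sqrt_pos.mpr hl0)]
    rw [h1, ← Real.exp_nat_mul, hE, ← Real.exp_add]
    apply Real.exp_le_exp.mpr
    nlinarith
  have hs12 : 12 ≤ Real.sqrt l := Real.le_sqrt_of_sq_le (by linarith)
  have hsq : Real.sqrt l * q ≤ 1 / 4 := by
    have h1 : Real.sqrt l * Real.sqrt l = l := Real.mul_self_sqrt hl0.le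
    rw [hq, ← mul_div_assoc, div_le_iff₀ hl0]
    nlinarith
  have hpow : E * E * q ^ m ≤ 1 / 4 := by
    calc E * E * q ^ m ≤ (Real.sqrt l) ^ m * q ^ m := by gcongr
      _ = (Real.sqrt l * q) ^ m := (mul_pow _ _ _).symm
      _ ≤ (1 / 4) ^ m := by gcongr
      _ ≤ (1 / 4) ^ 1 := pow_le_pow_of_le_one (by norm_num) (by norm_num) hm1
      _ = 1 / 4 := by norm_num
  have hfin : Real.exp (-((n : ℝ) * Real.log l) / 8) = 1 / E := by
    rw [neg_div, Real.exp_neg, hE, one_div]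
  rw [hfin]
  calc _ ≤ ∑ s ∈ Finset.Icc m n, 2 * E * q ^ s := Finset.sum_le_sum hterm
    _ = 2 * E * ∑ s ∈ Finset.Icc m n, q ^ s := by rw [Finset.mul_sum]
    _ ≤ 2 * E * (q ^ m / (1 - q)) := by gcongr
    _ ≤ 1 / E := by
      have h1 : 0 < 1 - q := by linarith
      rw [← mul_div_assoc, div_le_div_iff₀ h1 hE0]
      nlinarith
end

section
/- Let M be a finite set with |M| ≥ 32 and let c ≥ 1 be a real number. Let J be a job set over M with |J| ≤ |M|^c, and let L and l be positive integers satisfying 2·|M|^c ≥ L ≥ C(J) + D(J) and l ≥ 150·c·ln|M| / ln ln|M|. If h is a uniformly random function from J to {0,…,L−1} (drawn uniformly from the finite set of all such functions), then the probability that h is not (L,l)-good for J is at most exp(−|J|·ln(l)/8). -/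
open Finset

/-- The dilation of the job set: the maximum length of a job's machine sequence. -/
def dilation {M J : Type*} [Fintype J] (seq : J → List M) : ℕ :=
  Finset.univ.sup fun j : J => (seq j).length

/-- The bad pattern `B` occurs for the hash function `h : J → {0,…,L−1}` if
`h(j) + i = T` for all `T`, `m` and `(j,i) ∈ B T m`. -/
def PatternOccurs {M J : Type*} [Fintype M] [Fintype J]
    {L : ℕ} (B : Fin (2 * L) → M → Finset (J × ℕ)) (h : J → Fin L) : Prop :=
  ∀ T m, ∀ p ∈ B T m, (h p.1 : ℕ) + p.2 = (T : ℕ)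

/-- A hash function `h : J → {0,…,L−1}` is `(L,l)`-good for the job set `J` if no bad
pattern for `(J, L, l)` occurs for `h`. -/
def IsGoodHash {M J : Type*} [Fintype M] [Fintype J] (seq : J → List M)
    (L l : ℕ) (h : J → Fin L) : Prop :=
  ∀ B : Fin (2 * L) → M → Finset (J × ℕ), IsBadPattern seq L l B → ¬ PatternOccurs B h


lemma aux_analytic (c m : ℝ) (hc : 1 ≤ c) (hM : 32 ≤ m) (L l : ℕ) (hl0 : 0 < l)
    (hL : (L : ℝ) ≤ 2 * m ^ c)
    (hl : 150 * c * Real.log m / Real.log (Real.log m) ≤ (l : ℝ)) :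
    2 * L * m * (Real.exp l / Real.sqrt l ^ l) ≤ Real.log l / 8 := by
  have hm0 : 0 < m := by linarith
  obtain ⟨x, hx⟩ : ∃ x, x = Real.log m := ⟨_, rfl⟩
  have hmx : m = Real.exp x := by rw [hx, Real.exp_log hm0]
  have hx3 : 3 ≤ x := by
    have h1 : Real.log 32 ≤ x := by rw [hx]; exact Real.log_le_log (by norm_num) hM
    have h2 : Real.log 32 = 5 * Real.log 2 := by
      rw [show (32:ℝ) = 2 ^ 5 by norm_num, Real.log_pow]; norm_num
    have := Real.log_two_gt_d9
    linarith
  obtain ⟨y, hy⟩ : ∃ y, y = Real.log x := ⟨_, rfl⟩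
  have hxy : x = Real.exp y := by rw [hy, Real.exp_log (by linarith)]
  have hy0 : 0 < y := by rw [hy]; exact Real.log_pos (by linarith)
  rw [← hx, ← hy, div_le_iff₀ hy0] at hl
  have hlpos : (0:ℝ) < l := by exact_mod_cast hl0
  obtain ⟨z, hz⟩ : ∃ z, z = Real.log l := ⟨_, rfl⟩
  have hlz : (l:ℝ) = Real.exp z := by rw [hz, Real.exp_log hlpos]
  have hy2 : y ≤ 2 * Real.exp (y/2) := by
    have := Real.add_one_le_exp (y/2); linarith
  have hxs : x = Real.exp (y/2) * Real.exp (y/2) := by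
    rw [← Real.exp_add, hxy]; congr 1; ring
  have hE : 0 < Real.exp (y/2) := Real.exp_pos _
  have h75 : 75 * Real.exp (y/2) ≤ l := by
    have h1 : 150 * x ≤ l * y := by nlinarith
    have h2 : (l:ℝ) * y ≤ l * (2 * Real.exp (y/2)) := by gcongr
    have h3 : 150 * Real.exp (y/2) * Real.exp (y/2) ≤ (2 * l) * Real.exp (y/2) := by nlinarith
    have := le_of_mul_le_mul_right h3 hE
    linarith
  have he4 : Real.exp 4 ≤ 75 := by
    have : Real.exp 4 = Real.exp 1 ^ 4 := by rw [← Real.exp_nat_mul]; norm_num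
    rw [this]
    calc Real.exp 1 ^ 4 ≤ 2.7182818286 ^ 4 := by
          gcongr; exact Real.exp_one_lt_d9.le
      _ ≤ 75 := by norm_num
  have hz4 : y / 2 + 4 ≤ z := by
    rw [← Real.exp_le_exp, ← hlz, Real.exp_add]
    nlinarith
  have heps : Real.exp l / Real.sqrt l ^ l ≤ Real.exp (-(37 * (c * x))) := by
    have hs : Real.sqrt l = Real.exp (z/2) := by
      rw [Real.sqrt_eq_iff_mul_self_eq hlpos.le (Real.exp_pos _).le, ← Real.exp_add, hlz]
      congr 1; ring
    rw [hs, ← Real.exp_nat_mul, ← Real.exp_sub, Real.exp_le_exp]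
    have : (l:ℝ) * (y/4 + 1) ≤ l * (z/2 - 1) := by gcongr; linarith
    nlinarith [mul_nonneg (by linarith : (0:ℝ) ≤ c) (by linarith : (0:ℝ) ≤ x)]
  have hcx : 3 ≤ c * x := by nlinarith
  have hmc : m ^ c = Real.exp (c * x) := by
    rw [Real.rpow_def_of_pos hm0, ← hx, mul_comm]
  have hmle : m ≤ Real.exp (c * x) := by
    rw [hmx, Real.exp_le_exp]; nlinarith
  rw [hmc] at hL
  calc 2 * L * m * (Real.exp l / Real.sqrt l ^ l)
      ≤ 2 * (2 * Real.exp (c*x)) * Real.exp (c*x) * Real.exp (-(37 * (c * x))) := by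
        gcongr
    _ = 4 * Real.exp (-(35 * (c*x))) := by
        have : Real.exp (-(35 * (c*x))) = Real.exp (c*x) * Real.exp (c*x) * Real.exp (-(37 * (c * x))) := by
          rw [← Real.exp_add, ← Real.exp_add]; congr 1; ring
        rw [this]; ring
    _ ≤ 4 * (1 / 36) := by
        gcongr
        rw [Real.exp_neg, ← one_div]
        apply one_div_le_one_div_of_le (by norm_num)
        have := Real.add_one_le_exp (35 * (c*x))
        linarith
    _ ≤ Real.log l / 8 := by
        rw [← hz]; linarith

/-- weight -/
noncomputable def wt {α : Type*} (l : ℕ) (r : ℝ) (A : Finset α) : ℝ :=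
  open Classical in if A = ∅ then 1 else if l < A.card then r ^ A.card else 0

lemma wt_nonneg {α : Type*} (l : ℕ) (r : ℝ) (hr : 0 ≤ r) (A : Finset α) : 0 ≤ wt l r A := by
  unfold wt
  split_ifs <;> positivity

lemma wt_eq {α : Type*} (l : ℕ) (r : ℝ) (A : Finset α) (h : A = ∅ ∨ l < A.card) :
    wt l r A = r ^ A.card := by
  unfold wt
  rcases h with h | h
  · simp [h]
  · rw [if_pos h]
    split_ifs with h1
    · simp [h1]
    · rfl

lemma sum_wt_le {α : Type*} (S : Finset α) (L l : ℕ) (hL : 0 < L) (hl : 0 < l)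
    (hS : S.card ≤ L) :
    ∑ A ∈ S.powerset, wt l (Real.sqrt l / L) A ≤ 1 + Real.exp l / Real.sqrt l ^ l := by
  classical
  have hl1 : (1:ℝ) ≤ l := by exact_mod_cast hl
  have hs1 : 1 ≤ Real.sqrt l := Real.one_le_sqrt.mpr hl1
  have hs0 : 0 < Real.sqrt l := by linarith
  have hL' : (0:ℝ) < L := by exact_mod_cast hL
  have key : ∀ A ∈ S.powerset, wt l (Real.sqrt l / L) A ≤
      (if A = ∅ then 1 else 0) + ((l:ℝ)/L) ^ A.card * 1 ^ (S.card - A.card) / Real.sqrt l ^ l := by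
    intro A _
    have hp : 0 ≤ ((l:ℝ)/L) ^ A.card * 1 ^ (S.card - A.card) / Real.sqrt l ^ l := by positivity
    unfold wt
    by_cases h0 : A = ∅
    · rw [if_pos h0, if_pos h0]; linarith
    · rw [if_neg h0, if_neg h0]
      split_ifs with h1
      · rw [zero_add, one_pow, mul_one, le_div_iff₀ (by positivity)]
        have : (l:ℝ) / L = Real.sqrt l / L * Real.sqrt l := by
          rw [div_mul_eq_mul_div, Real.mul_self_sqrt (by linarith)]
        rw [this, mul_pow]
        gcongr
      · linarith
  calc _ ≤ ∑ A ∈ S.powerset, ((if A = ∅ then (1:ℝ) else 0) +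
        ((l:ℝ)/L) ^ A.card * 1 ^ (S.card - A.card) / Real.sqrt l ^ l) := sum_le_sum key
    _ = 1 + ((l:ℝ)/L + 1) ^ S.card / Real.sqrt l ^ l := by
        rw [sum_add_distrib, ← sum_div, Finset.sum_pow_mul_eq_add_pow]
        simp
    _ ≤ _ := by
        gcongr
        calc ((l:ℝ)/L + 1) ^ S.card ≤ ((l:ℝ)/L + 1) ^ L := by
              apply pow_le_pow_right₀ _ hS
              have : 0 ≤ (l:ℝ)/L := by positivity
              linarith
          _ ≤ Real.exp ((l:ℝ)/L) ^ L := by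
              gcongr; exact Real.add_one_le_exp _
          _ = Real.exp l := by
              rw [← Real.exp_nat_mul]; congr 1; field_simp

/-- occurrences of machine m -/
noncomputable def occ {M J : Type*} [DecidableEq M] [Fintype J] (seq : J → List M) (m : M) :
    Finset (J × ℕ) :=
  open Classical in
  univ.biUnion fun j : J => ((range (seq j).length).filter fun i => (seq j)[i]? = some m).map
    ⟨fun i => (j, i), fun a b h => by simpa using h⟩

lemma mem_occ {M J : Type*} [DecidableEq M] [Fintype J] (seq : J → List M) (m : M) (p : J × ℕ)
    (h : (seq p.1)[p.2]? = some m) : p ∈ occ seq m := by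
  unfold occ
  obtain ⟨j, i⟩ := p
  obtain ⟨hi, -⟩ := List.getElem?_eq_some_iff.mp h
  simp only [mem_biUnion, mem_map, mem_filter, mem_range, mem_univ, true_and]
  exact ⟨j, i, ⟨hi, h⟩, rfl⟩

lemma count_eq {M : Type*} [DecidableEq M] (a : List M) (m : M) :
    ((range a.length).filter fun i => a[i]? = some m).card = a.count m := by
  induction a with
  | nil => simp
  | cons b t ih =>
    rw [List.length_cons, Finset.range_eq_Ico, ← Finset.insert_Ico_add_one_left_eq_Ico (by omega)]
    rw [List.count_cons, ← ih, Finset.filter_insert]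
    have : ((Ico (0+1) (t.length+1)).filter fun i => (b :: t)[i]? = some m) =
        ((range t.length).filter fun i => t[i]? = some m).map ⟨fun i => i + 1, fun a b h => by simpa using h⟩ := by
      ext i
      simp only [mem_filter, mem_Ico, mem_map, mem_range]
      constructor
      · rintro ⟨⟨h1, h2⟩, h3⟩
        obtain ⟨k, rfl⟩ : ∃ k, i = k + 1 := ⟨i - 1, by omega⟩
        exact ⟨k, ⟨by omega, by simpa using h3⟩, rfl⟩
      · rintro ⟨k, ⟨h1, h2⟩, rfl⟩
        show (0 + 1 ≤ k + 1 ∧ k + 1 < t.length + 1) ∧ (b :: t)[k + 1]? = some m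
        exact ⟨⟨by omega, by omega⟩, by simpa using h2⟩
    rw [this]
    by_cases hb : b = m
    · simp [hb]
    · simp [hb]

lemma card_occ_le {M J : Type*} [Fintype M] [DecidableEq M] [Fintype J] (seq : J → List M) (m : M) :
    (occ seq m).card ≤ congestion seq := by
  classical
  unfold occ congestion
  refine le_trans card_biUnion_le ?_
  refine le_trans ?_ (Finset.le_sup (f := fun m : M => ∑ j : J, (seq j).count m) (mem_univ m))
  apply sum_le_sum
  intro j _
  rw [card_map, ← count_eq]

lemma card_occurs {M J : Type*} [Fintype M] [Fintype J] (seq : J → List M)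
    (L l : ℕ) (hL : 0 < L) (B : Fin (2 * L) → M → Finset (J × ℕ)) (hB : IsBadPattern seq L l B) :
    (Nat.card {h : J → Fin L // PatternOccurs B h} : ℝ) ≤
      (L:ℝ) ^ Fintype.card J * ∏ q : Fin (2 * L) × M, (1 / (L:ℝ)) ^ (B q.1 q.2).card := by
  classical
  let Sg : Finset (Σ _ : Fin (2 * L) × M, J × ℕ) := univ.sigma fun q => B q.1 q.2
  let U : Finset J := Sg.image fun a => a.2.1
  have hU : U.card = ∑ q : Fin (2 * L) × M, (B q.1 q.2).card := by
    rw [← card_sigma]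
    apply card_image_of_injOn
    rintro ⟨⟨T, m⟩, p⟩ h1 ⟨⟨T', m'⟩, p'⟩ h2 h
    have h1' : p ∈ B T m := by simpa [Sg] using h1
    have h2' : p' ∈ B T' m' := by simpa [Sg] using h2
    obtain ⟨rfl, rfl, rfl⟩ := hB.2.1 T m T' m' p h1' p' h2' h
    rfl
  have hinj : Function.Injective
      (fun (h : {h : J → Fin L // PatternOccurs B h}) (j : {j : J // j ∉ U}) => h.1 j.1) := by
    rintro ⟨h, hh⟩ ⟨g, hg⟩ e
    apply Subtype.ext
    funext j
    by_cases hj : j ∈ U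
    · obtain ⟨⟨⟨T, m⟩, p⟩, h1, rfl⟩ := mem_image.mp hj
      have h1' : p ∈ B T m := by simpa [Sg] using h1
      have a := hh T m p h1'
      have b := hg T m p h1'
      apply Fin.ext
      show (h p.1 : ℕ) = g p.1
      omega
    · exact congrFun e ⟨j, hj⟩
  have hcard := Nat.card_le_card_of_injective _ hinj
  rw [Nat.card_eq_fintype_card (α := {j : J // j ∉ U} → Fin L), Fintype.card_fun, Fintype.card_fin,
    Fintype.card_subtype_compl, Fintype.card_coe] at hcard
  have hUle : U.card ≤ Fintype.card J := card_le_univ U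
  rw [prod_pow_eq_pow_sum, ← hU]
  have hL' : (0:ℝ) < L := by exact_mod_cast hL
  calc _ ≤ ((L ^ (Fintype.card J - U.card) : ℕ) : ℝ) := by exact_mod_cast hcard
    _ = _ := by
      push_cast
      rw [one_div, inv_pow, pow_sub₀ _ hL'.ne' hUle]

/-- If `|M| ≥ 32`, `c ≥ 1`, `|J| ≤ |M|^c`, `2·|M|^c ≥ L ≥ C(J) + D(J)` and
`l ≥ 150·c·ln|M| / ln ln|M|`, then the probability that a uniformly random function
`h : J → {0,…,L−1}` is not `(L,l)`-good for `J` is at most `exp(−|J|·ln(l)/8)`. The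
probability is expressed as a ratio of counts of functions. -/
theorem prob_hash_not_good_le {M J : Type*} [Fintype M] [DecidableEq M] [Fintype J]
    (seq : J → List M) (c : ℝ) (hc : 1 ≤ c) (hM : 32 ≤ Fintype.card M)
    (hJ : (Fintype.card J : ℝ) ≤ (Fintype.card M : ℝ) ^ c)
    (L l : ℕ) (hL0 : 0 < L) (hl0 : 0 < l)
    (hL : (L : ℝ) ≤ 2 * (Fintype.card M : ℝ) ^ c)
    (hCD : congestion seq + dilation seq ≤ L)
    (hl : 150 * c * Real.log (Fintype.card M) / Real.log (Real.log (Fintype.card M)) ≤ (l : ℝ)) :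
    (Nat.card {h : J → Fin L // ¬ IsGoodHash seq L l h} : ℝ) /
        (Nat.card (J → Fin L) : ℝ) ≤
      Real.exp (-((Fintype.card J : ℝ) * Real.log l) / 8) := by
  classical
  have hL' : (0:ℝ) < L := by exact_mod_cast hL0
  have hl' : (0:ℝ) < l := by exact_mod_cast hl0
  have hl1 : (1:ℝ) ≤ l := by exact_mod_cast hl0
  have hana := aux_analytic c (Fintype.card M) hc (by exact_mod_cast hM) L l hl0 hL hl
  set s := Real.sqrt l with hs
  set ε := Real.exp l / s ^ l with hε
  have hs1 : 1 ≤ s := Real.one_le_sqrt.mpr hl1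
  have hs0 : 0 < s := by linarith
  have hε0 : 0 ≤ ε := by positivity
  set n := Fintype.card J with hn
  have hcardfun : (Nat.card (J → Fin L) : ℝ) = (L:ℝ) ^ n := by
    rw [Nat.card_eq_fintype_card, Fintype.card_fun, Fintype.card_fin]; push_cast; rfl
  rw [hcardfun]
  rw [div_le_iff₀ (by positivity)]
  rcases Nat.eq_zero_or_pos n with h0 | hnpos
  · have hE : IsEmpty J := Fintype.card_eq_zero_iff.mp h0
    have : IsEmpty {h : J → Fin L // ¬ IsGoodHash seq L l h} := by
      refine ⟨fun ⟨h, hh⟩ => hh ?_⟩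
      intro B hB _
      have h4 := hB.2.2.2
      have : ∀ T m, B T m = ∅ := fun T m => by
        apply eq_empty_of_forall_notMem
        intro p _
        exact hE.elim p.1
      simp [this] at h4
    rw [Nat.card_of_isEmpty]
    push_cast
    positivity
  -- union bound
  let P : Finset (Fin (2 * L) × M → Finset (J × ℕ)) :=
    Fintype.piFinset fun q => (occ seq q.2).powerset
  let cur : (Fin (2 * L) × M → Finset (J × ℕ)) → Fin (2 * L) → M → Finset (J × ℕ) :=
    fun B T m => B (T, m)
  let P' := P.filter fun B => IsBadPattern seq L l (cur B)
  have hunion : (Nat.card {h : J → Fin L // ¬ IsGoodHash seq L l h} : ℝ) ≤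
      ∑ B ∈ P', (Nat.card {h : J → Fin L // PatternOccurs (cur B) h} : ℝ) := by
    have e1 : Nat.card {h : J → Fin L // ¬ IsGoodHash seq L l h} =
        (univ.filter fun h : J → Fin L => ¬ IsGoodHash seq L l h).card := by
      rw [Nat.card_eq_fintype_card, Fintype.card_subtype]
    have e2 : ∀ B, Nat.card {h : J → Fin L // PatternOccurs (cur B) h} =
        (univ.filter fun h : J → Fin L => PatternOccurs (cur B) h).card := by
      intro B
      rw [Nat.card_eq_fintype_card, Fintype.card_subtype]
    rw [e1]
    simp_rw [e2]
    norm_cast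
    refine le_trans (card_le_card ?_) (card_biUnion_le
      (s := P') (t := fun B => univ.filter fun h : J → Fin L => PatternOccurs (cur B) h))
    intro h hh
    simp only [mem_filter, mem_univ, true_and, IsGoodHash, not_forall, not_not] at hh
    obtain ⟨B, hB, ho⟩ := hh
    simp only [mem_biUnion, mem_filter, mem_univ, true_and]
    refine ⟨fun q => B q.1 q.2, ?_, ho⟩
    simp only [P', P, mem_filter, Fintype.mem_piFinset, mem_powerset]
    refine ⟨fun q p hp => mem_occ _ _ _ (hB.1 q.1 q.2 p hp), hB⟩
  have hterm : ∀ B ∈ P', (Nat.card {h : J → Fin L // PatternOccurs (cur B) h} : ℝ) ≤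
      (L:ℝ) ^ n * Real.exp (-((n:ℝ) * Real.log l) / 4) *
        ∏ q : Fin (2 * L) × M, wt l (s / L) (B q) := by
    intro B hB
    have hBad : IsBadPattern seq L l (cur B) := (mem_filter.mp hB).2
    refine (card_occurs seq L l hL0 (cur B) hBad).trans ?_
    rw [mul_assoc]
    gcongr
    have hw : ∀ q, wt l (s / L) (B q) = s ^ (B q).card * (1 / (L:ℝ)) ^ (B q).card := by
      intro q
      rw [wt_eq _ _ _ (hBad.2.2.1 q.1 q.2), ← mul_pow]
      congr 1; ring
    simp_rw [hw]
    rw [prod_mul_distrib, ← mul_assoc]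
    apply le_mul_of_one_le_left (by positivity)
    rw [prod_pow_eq_pow_sum]
    have hsum : n < 2 * ∑ q, (B q).card := by
      have := hBad.2.2.2
      rw [Fintype.sum_prod_type]
      exact this
    have hsum' : (n:ℝ) ≤ 2 * ((∑ q, (B q).card : ℕ) : ℝ) := by exact_mod_cast hsum.le
    have hse : s = Real.exp (Real.log l / 2) := by
      rw [hs, Real.sqrt_eq_iff_mul_self_eq hl'.le (Real.exp_pos _).le, ← Real.exp_add, add_halves,
        Real.exp_log hl']
    rw [hse, ← Real.exp_nat_mul, ← Real.exp_add, Real.one_le_exp_iff]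
    have := mul_le_mul_of_nonneg_right hsum' (Real.log_nonneg hl1)
    linarith
  have hprod : ∑ B ∈ P', ∏ q : Fin (2 * L) × M, wt l (s / L) (B q) ≤
      Real.exp (2 * L * (Fintype.card M) * ε) := by
    have hr : 0 ≤ s / L := by positivity
    calc _ ≤ ∑ B ∈ P, ∏ q : Fin (2 * L) × M, wt l (s / L) (B q) :=
          sum_le_sum_of_subset_of_nonneg (filter_subset _ _)
            fun B _ _ => prod_nonneg fun q _ => wt_nonneg _ _ hr _
      _ = ∏ q : Fin (2 * L) × M, ∑ A ∈ (occ seq q.2).powerset, wt l (s / L) A := by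
          rw [prod_univ_sum]
      _ ≤ ∏ q : Fin (2 * L) × M, Real.exp ε := by
          apply prod_le_prod
          · intro q _
            exact sum_nonneg fun A _ => wt_nonneg _ _ hr _
          · intro q _
            refine (sum_wt_le (occ seq q.2) L l hL0 hl0 ?_).trans ?_
            · have := card_occ_le seq q.2
              omega
            · have := Real.add_one_le_exp ε
              linarith
      _ = _ := by
          rw [prod_const, card_univ, ← Real.exp_nat_mul]
          simp
  calc _ ≤ _ := hunion
    _ ≤ ∑ B ∈ P', (L:ℝ) ^ n * Real.exp (-((n:ℝ) * Real.log l) / 4) *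
        ∏ q : Fin (2 * L) × M, wt l (s / L) (B q) := sum_le_sum hterm
    _ = (L:ℝ) ^ n * Real.exp (-((n:ℝ) * Real.log l) / 4) *
        ∑ B ∈ P', ∏ q : Fin (2 * L) × M, wt l (s / L) (B q) := by rw [mul_sum]
    _ ≤ (L:ℝ) ^ n * Real.exp (-((n:ℝ) * Real.log l) / 4) *
        Real.exp (2 * L * (Fintype.card M) * ε) := by gcongr
    _ ≤ _ := by
      rw [mul_assoc, mul_comm, ← Real.exp_add]
      gcongr
      have h1n : (1:ℝ) ≤ n := by exact_mod_cast hnpos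
      have := mul_le_mul_of_nonneg_right h1n (Real.log_nonneg hl1)
      linarith
end

section
/- Let M be a finite set with |M| ≥ 32 and let c ≥ 1 be a real number. Let J be a job set over M with |J| ≤ |M|^c, and let L and l be positive integers satisfying 2·|M|^c ≥ L ≥ C(J) + D(J) and l ≥ 150·c·ln|M| / ln ln|M|. Let k ≥ 1 be an integer. If h_1, …, h_k are independent uniformly random functions from J to {0,…,L−1}, then the probability that none of h_1, …, h_k is (L,l)-good for J is at most exp(−k·|J|·ln(l)/8). -/
open Finset

lemma aux_count {M : Type*} [DecidableEq M] (m : M) (s : List M) (D : ℕ) :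
    ((range D).filter (fun i => s[i]? = some m)).card ≤ s.count m := by
  induction s generalizing D with
  | nil => simp
  | cons a t ih =>
    cases D with
    | zero => simp
    | succ D =>
      have := ih D
      rw [Finset.card_filter] at this ⊢
      rw [Finset.sum_range_succ']
      simp only [List.getElem?_cons_succ, List.getElem?_cons_zero, List.count_cons,
        Option.some.injEq, beq_iff_eq]
      omega

noncomputable def auxP {M J : Type*} [DecidableEq M] [Fintype J] (seq : J → List M) (m : M) :
    Finset (J × ℕ) :=
  ((univ : Finset J) ×ˢ range (dilation seq)).filter (fun p => (seq p.1)[p.2]? = some m)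

lemma auxP_card_le {M J : Type*} [Fintype M] [DecidableEq M] [Fintype J] (seq : J → List M)
    (m : M) : (auxP seq m).card ≤ congestion seq := by
  have h1 : (auxP seq m).card ≤ ∑ j : J, (seq j).count m := by
    unfold auxP
    rw [Finset.card_filter, Finset.sum_product]
    refine Finset.sum_le_sum fun j _ => ?_
    have := aux_count m (seq j) (dilation seq)
    rw [Finset.card_filter] at this
    exact this
  exact h1.trans (Finset.le_sup (f := fun m : M => ∑ j : J, (seq j).count m) (mem_univ m))

lemma auxP_sum_le {M J : Type*} [Fintype M] [DecidableEq M] [Fintype J] (seq : J → List M) :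
    ∑ m, (auxP seq m).card ≤ Fintype.card J * dilation seq := by
  classical
  rw [← Finset.card_biUnion]
  · calc _ ≤ ((univ : Finset J) ×ˢ range (dilation seq)).card := by
          refine Finset.card_le_card ?_
          intro p hp
          obtain ⟨m, _, hm⟩ := Finset.mem_biUnion.1 hp
          exact (Finset.mem_filter.1 hm).1
      _ = _ := by simp
  · intro m _ m' _ hne
    rw [Function.onFun, Finset.disjoint_left]
    intro p hp hp'
    have h1 := (Finset.mem_filter.1 hp).2
    have h2 := (Finset.mem_filter.1 hp').2
    rw [h1] at h2
    exact hne (Option.some.inj h2)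

lemma aux_mem_P {M J : Type*} [DecidableEq M] [Fintype J] (seq : J → List M) (m : M)
    (p : J × ℕ) (h : (seq p.1)[p.2]? = some m) : p ∈ auxP seq m := by
  refine Finset.mem_filter.2 ⟨?_, h⟩
  have h1 : p.2 < (seq p.1).length := (List.getElem?_eq_some_iff.1 h).1
  have h2 : (seq p.1).length ≤ dilation seq :=
    Finset.le_sup (f := fun j : J => (seq j).length) (mem_univ p.1)
  simp only [mem_product, mem_univ, mem_range, true_and]
  omega

lemma aux_occurs {M J : Type*} [Fintype M] [Fintype J] (seq : J → List M)
    (L l : ℕ) (hL0 : 0 < L) (B : Fin (2 * L) → M → Finset (J × ℕ)) (hB : IsBadPattern seq L l B)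
    (S : Finset (J → Fin L)) (hS : ∀ h ∈ S, PatternOccurs B h) :
    (S.card : ℝ) ≤ (L : ℝ) ^ Fintype.card J * ((L : ℝ)⁻¹) ^ (∑ T, ∑ m, (B T m).card) := by
  classical
  rcases S.eq_empty_or_nonempty with rfl | ⟨h0, hh0⟩
  · simp; positivity
  set U : Finset J := (univ : Finset (Fin (2 * L) × M)).biUnion
    (fun t => (B t.1 t.2).image Prod.fst) with hU
  have hUc : U.card = ∑ T, ∑ m, (B T m).card := by
    rw [hU, Finset.card_biUnion, ← Fintype.sum_prod_type' (f := fun T m => (B T m).card)]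
    · refine Finset.sum_congr rfl fun t _ => ?_
      refine Finset.card_image_of_injOn ?_
      intro p hp q hq hpq
      exact (hB.2.1 _ _ _ _ p hp q hq hpq).2.2
    · intro t _ t' _ hne
      rw [Function.onFun, Finset.disjoint_left]
      intro j hj hj'
      obtain ⟨p, hp, rfl⟩ := Finset.mem_image.1 hj
      obtain ⟨q, hq, hqp⟩ := Finset.mem_image.1 hj'
      have := hB.2.1 _ _ _ _ p hp q hq hqp.symm
      exact hne (Prod.ext this.1 this.2.1)
  have hsub : S ⊆ Fintype.piFinset (fun j => if j ∈ U then {h0 j} else univ) := by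
    intro h hh
    rw [Fintype.mem_piFinset]
    intro j
    split_ifs with hj
    · obtain ⟨t, _, ht⟩ := Finset.mem_biUnion.1 hj
      obtain ⟨p, hp, rfl⟩ := Finset.mem_image.1 ht
      have h1 := hS h hh _ _ p hp
      have h2 := hS h0 hh0 _ _ p hp
      rw [Finset.mem_singleton]
      ext
      omega
    · simp
  have hcard := Finset.card_le_card hsub
  rw [Fintype.card_piFinset] at hcard
  have hL : (L : ℝ) ≠ 0 := by positivity
  calc (S.card : ℝ) ≤ ((∏ j, (if j ∈ U then ({h0 j} : Finset (Fin L)) else univ).card : ℕ) : ℝ) := by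
        exact_mod_cast hcard
    _ = ∏ j, ((L : ℝ) * (if j ∈ U then (L : ℝ)⁻¹ else 1)) := by
        push_cast
        refine Finset.prod_congr rfl fun j _ => ?_
        split_ifs <;> simp [hL]
    _ = _ := by
        rw [Finset.prod_mul_distrib, ← hUc]
        simp [Finset.prod_ite, Finset.filter_mem_eq_inter]

lemma aux_factor {α : Type*} [DecidableEq α] (P : Finset α) (L l : ℕ) (hL0 : 0 < L) (hl0 : 0 < l)
    (hP : P.card ≤ L) :
    ∑ S ∈ P.powerset.filter (fun S => S = ∅ ∨ l < S.card), (Real.sqrt l / L) ^ S.card ≤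
      Real.exp ((P.card : ℝ) / L * (Real.exp l * ((Real.sqrt l)⁻¹) ^ l)) := by
  set z := Real.sqrt l with hz
  have hz1 : 1 ≤ z := by
    rw [hz, Real.one_le_sqrt]; exact_mod_cast hl0
  have hzz : z * z = l := Real.mul_self_sqrt (by positivity)
  have hLp : (0 : ℝ) < L := by positivity
  have hterm : ∀ S ∈ P.powerset.filter (fun S => S = ∅ ∨ l < S.card), (z / L) ^ S.card ≤
      (if S = ∅ then 1 - (z⁻¹) ^ l else 0) + ((l : ℝ) / L) ^ S.card * (z⁻¹) ^ l := by
    intro S hS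
    rcases (Finset.mem_filter.1 hS).2 with rfl | h
    · simp
    · have hne : S ≠ ∅ := by rintro rfl; simp at h
      rw [if_neg hne, zero_add, ← hzz, mul_div_assoc, mul_pow, mul_comm (z ^ _), mul_assoc]
      refine le_mul_of_one_le_right (by positivity) ?_
      rw [inv_pow, ← div_eq_mul_inv, one_le_div (by positivity)]
      exact pow_le_pow_right₀ hz1 h.le
  have hz0 : (z⁻¹) ^ l ≤ 1 := pow_le_one₀ (by positivity) (inv_le_one_of_one_le₀ hz1)
  have hsum : ∑ S ∈ P.powerset, ((l : ℝ) / L) ^ S.card = (1 + (l : ℝ) / L) ^ P.card := by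
    have := Finset.sum_pow_mul_eq_add_pow ((l : ℝ) / L) 1 P
    simp only [one_pow, mul_one] at this
    rw [this, add_comm]
  have ht1 : (P.card : ℝ) / L ≤ 1 := by
    rw [div_le_one hLp]; exact_mod_cast hP
  have hconv : (1 + (l : ℝ) / L) ^ P.card ≤ 1 + (P.card : ℝ) / L * Real.exp l := by
    have h1 : (1 + (l : ℝ) / L) ^ P.card ≤ Real.exp ((P.card : ℝ) / L * l) := by
      have : (P.card : ℝ) / L * l = P.card * ((l : ℝ) / L) := by ring
      rw [this, Real.exp_nat_mul]
      refine pow_le_pow_left₀ (by positivity) ?_ _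
      linarith [Real.add_one_le_exp ((l : ℝ) / L)]
    have h2 := convexOn_exp.2 (Set.mem_univ (0 : ℝ)) (Set.mem_univ (l : ℝ))
      (sub_nonneg.2 ht1) (by positivity : (0 : ℝ) ≤ (P.card : ℝ) / L) (by ring)
    simp only [smul_eq_mul, mul_zero, zero_add, Real.exp_zero, mul_one] at h2
    have : (0 : ℝ) ≤ (P.card : ℝ) / L := by positivity
    linarith
  calc _ ≤ ∑ S ∈ P.powerset.filter (fun S => S = ∅ ∨ l < S.card),
        ((if S = ∅ then 1 - (z⁻¹) ^ l else 0) + ((l : ℝ) / L) ^ S.card * (z⁻¹) ^ l) :=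
        Finset.sum_le_sum hterm
    _ ≤ ∑ S ∈ P.powerset,
        ((if S = ∅ then 1 - (z⁻¹) ^ l else 0) + ((l : ℝ) / L) ^ S.card * (z⁻¹) ^ l) := by
        refine Finset.sum_le_sum_of_subset_of_nonneg (Finset.filter_subset _ _) ?_
        intro S _ _
        have : 0 ≤ (if S = ∅ then 1 - (z⁻¹) ^ l else 0) := by
          split_ifs
          · linarith
          · exact le_rfl
        positivity
    _ = (1 - (z⁻¹) ^ l) + (1 + (l : ℝ) / L) ^ P.card * (z⁻¹) ^ l := by
        rw [Finset.sum_add_distrib, ← Finset.sum_mul, hsum]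
        simp
    _ ≤ (1 - (z⁻¹) ^ l) + (1 + (P.card : ℝ) / L * Real.exp l) * (z⁻¹) ^ l := by
        gcongr
    _ = (P.card : ℝ) / L * (Real.exp l * (z⁻¹) ^ l) + 1 := by ring
    _ ≤ _ := Real.add_one_le_exp _

lemma aux_numeric (N c : ℝ) (hN : 32 ≤ N) (hc : 1 ≤ c) (l : ℕ)
    (hl : 150 * c * Real.log N / Real.log (Real.log N) ≤ (l : ℝ)) :
    4 * N ^ c * (Real.exp l * ((Real.sqrt l)⁻¹) ^ l) ≤ Real.log l / 8 := by
  set u := Real.log N with hu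
  have hNp : 0 < N := by linarith
  have hu2 : 2 ≤ u := by
    rw [hu, Real.le_log_iff_exp_le hNp]
    have : Real.exp 2 = Real.exp 1 * Real.exp 1 := by rw [← Real.exp_add]; norm_num
    rw [this]
    nlinarith [Real.exp_one_lt_d9, Real.exp_pos 1]
  set v := Real.log u with hv
  have hv0 : 0 < v := Real.log_pos (by linarith)
  have hvu : v ≤ u := by linarith [Real.log_le_sub_one_of_pos (by linarith : 0 < u)]
  have hl' : 150 * c * u ≤ l * v := by rwa [div_le_iff₀ hv0] at hl
  have hl150 : (150 : ℝ) ≤ l := by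
    by_contra! h
    nlinarith
  have hlp : (0 : ℝ) < l := by linarith
  set y := Real.log l with hy
  have hy4 : 4 ≤ y := by
    rw [hy, Real.le_log_iff_exp_le hlp]
    have : Real.exp 4 = Real.exp 1 ^ 4 := by rw [← Real.exp_nat_mul]; norm_num
    rw [this]
    have h3 : Real.exp 1 ^ 4 ≤ (3 : ℝ) ^ 4 := by
      gcongr
      linarith [Real.exp_one_lt_d9]
    linarith
  have hyv : v ≤ 2 * y := by
    -- l ≥ sqrt u
    have h1 : v ≤ 2 * Real.sqrt u := by
      have := Real.log_sqrt (by linarith : 0 ≤ u)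
      have h3 : Real.log (Real.sqrt u) ≤ Real.sqrt u - 1 :=
        Real.log_le_sub_one_of_pos (Real.sqrt_pos.2 (by linarith))
      rw [this] at h3
      linarith
    have hs : 0 < Real.sqrt u := Real.sqrt_pos.2 (by linarith)
    have hss : Real.sqrt u * Real.sqrt u = u := Real.mul_self_sqrt (by linarith)
    have h2 : Real.sqrt u ≤ l := by
      by_contra! h
      have h5 : (l : ℝ) * v ≤ Real.sqrt u * (2 * Real.sqrt u) :=
        mul_le_mul h.le h1 hv0.le hs.le
      nlinarith
    have h3 := Real.log_le_log hs h2
    rw [Real.log_sqrt (by linarith)] at h3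
    linarith
  have hly : 75 * c * u ≤ l * y := by nlinarith
  have he : Real.exp l * ((Real.sqrt l)⁻¹) ^ l = Real.exp (l - l * y / 2) := by
    have : Real.sqrt l = Real.exp (y / 2) := by
      rw [hy, ← Real.log_sqrt hlp.le, Real.exp_log (Real.sqrt_pos.2 hlp)]
    rw [this, ← Real.exp_neg, ← Real.exp_nat_mul, ← Real.exp_add]
    congr 1; ring
  have hNc : N ^ c = Real.exp (u * c) := by rw [Real.rpow_def_of_pos hNp]
  rw [he, hNc, mul_assoc, ← Real.exp_add]
  have hcu : 2 ≤ c * u := by nlinarith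
  have hneg : u * c + (l - l * y / 2) ≤ -4 := by nlinarith
  have h4 : Real.exp (u * c + (l - l * y / 2)) ≤ Real.exp (-4) := Real.exp_le_exp.2 hneg
  have h5 : Real.exp (-4) ≤ 1 / 8 := by
    have : (2 : ℝ) ^ 4 ≤ Real.exp 4 := by
      have : Real.exp 4 = Real.exp 1 ^ 4 := by rw [← Real.exp_nat_mul]; norm_num
      rw [this]
      gcongr
      linarith [Real.exp_one_gt_d9]
    rw [Real.exp_neg, inv_le_comm₀ (Real.exp_pos _) (by norm_num)]
    linarith
  linarith

lemma aux_single {M J : Type*} [Fintype M] [DecidableEq M] [Fintype J]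
    (seq : J → List M) (c : ℝ) (hc : 1 ≤ c) (hM : 32 ≤ Fintype.card M)
    (L l : ℕ) (hL0 : 0 < L) (hl0 : 0 < l)
    (hL : (L : ℝ) ≤ 2 * (Fintype.card M : ℝ) ^ c)
    (hCD : congestion seq + dilation seq ≤ L)
    (hl : 150 * c * Real.log (Fintype.card M) / Real.log (Real.log (Fintype.card M)) ≤ (l : ℝ)) :
    (Nat.card {h : J → Fin L // ¬ IsGoodHash seq L l h} : ℝ) ≤
      (L : ℝ) ^ Fintype.card J * Real.exp (-((Fintype.card J : ℝ) * Real.log l) / 8) := by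
  classical
  set n := Fintype.card J with hn
  set z := Real.sqrt l with hz
  have hlp : (0 : ℝ) < l := by positivity
  have hLp : (0 : ℝ) < L := by positivity
  have hz1 : 1 ≤ z := by
    rw [hz, Real.one_le_sqrt]; exact_mod_cast hl0
  have hzexp : z = Real.exp (Real.log l / 2) := by
    rw [← Real.log_sqrt hlp.le, Real.exp_log (Real.sqrt_pos.2 hlp)]
  have hlog : 0 ≤ Real.log l := Real.log_natCast_nonneg l
  set F : Finset (Fin (2 * L) × M → Finset (J × ℕ)) := Fintype.piFinset
    (fun t => (auxP seq t.2).powerset.filter (fun S => S = ∅ ∨ l < S.card)) with hF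
  set G := F.filter (fun B => IsBadPattern seq L l (fun T m => B (T, m))) with hG
  set occ : (Fin (2 * L) × M → Finset (J × ℕ)) → Finset (J → Fin L) :=
    fun B => univ.filter (fun h => PatternOccurs (fun T m => B (T, m)) h) with hocc
  set E := Real.exp l * (z⁻¹) ^ l with hE
  have hcard : Nat.card {h : J → Fin L // ¬ IsGoodHash seq L l h} ≤ ∑ B ∈ G, (occ B).card := by
    rw [Nat.card_eq_fintype_card, Fintype.card_subtype]
    refine (Finset.card_le_card ?_).trans Finset.card_biUnion_le
    intro h hh
    have hh := (Finset.mem_filter.1 hh).2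
    unfold IsGoodHash at hh
    push Not at hh
    obtain ⟨B, hB, hBo⟩ := hh
    refine Finset.mem_biUnion.2 ⟨fun t => B t.1 t.2, ?_, ?_⟩
    · refine Finset.mem_filter.2 ⟨?_, hB⟩
      rw [hF, Fintype.mem_piFinset]
      intro t
      refine Finset.mem_filter.2 ⟨?_, hB.2.2.1 _ _⟩
      rw [Finset.mem_powerset]
      intro p hp
      exact aux_mem_P seq _ p (hB.1 _ _ p hp)
    · exact Finset.mem_filter.2 ⟨mem_univ _, hBo⟩
  have hterm : ∀ B ∈ G, ((occ B).card : ℝ) ≤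
      (L : ℝ) ^ n * Real.exp (-(n * Real.log l) / 4) * ∏ t, (z / L) ^ (B t).card := by
    intro B hB
    have hBb := (Finset.mem_filter.1 hB).2
    have h1 := aux_occurs seq L l hL0 _ hBb (occ B) (fun h hh => (Finset.mem_filter.1 hh).2)
    have h2 := hBb.2.2.2
    rw [← Fintype.sum_prod_type (f := fun t => (B t).card)] at h1 h2
    rw [Finset.prod_pow_eq_pow_sum]
    set b := ∑ t, (B t).card with hb
    refine h1.trans ?_
    rw [mul_assoc]
    refine mul_le_mul_of_nonneg_left ?_ (by positivity)
    rw [div_eq_mul_inv z, mul_pow, ← mul_assoc]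
    refine le_mul_of_one_le_left (by positivity) ?_
    rw [hzexp, ← Real.exp_nat_mul, ← Real.exp_add]
    rw [Real.one_le_exp_iff]
    have h3 : (n : ℝ) ≤ 2 * b := by exact_mod_cast h2.le
    nlinarith
  have hsum : ∑ B ∈ F, ∏ t, (z / L) ^ (B t).card ≤ Real.exp (n * Real.log l / 8) := by
    rw [hF, ← Finset.prod_univ_sum (fun t : Fin (2 * L) × M =>
      (auxP seq t.2).powerset.filter (fun S => S = ∅ ∨ l < S.card))
      (fun _ S => (z / L) ^ S.card)]
    calc _ ≤ ∏ t : Fin (2 * L) × M, Real.exp (((auxP seq t.2).card : ℝ) / L * E) := by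
          refine Finset.prod_le_prod (fun t _ => Finset.sum_nonneg fun S _ => by positivity) ?_
          intro t _
          refine aux_factor _ L l hL0 hl0 ?_
          have := auxP_card_le seq t.2
          omega
      _ = Real.exp (2 * E * ((∑ m : M, (auxP seq m).card : ℕ) : ℝ)) := by
          rw [← Real.exp_sum, Fintype.sum_prod_type]
          congr 1
          simp only [Finset.sum_const, Finset.card_univ, Fintype.card_fin, nsmul_eq_mul]
          rw [← Finset.sum_mul, ← Finset.sum_div]
          push_cast
          generalize (∑ m, ((auxP seq m).card : ℝ)) = X
          generalize E = E'
          field_simp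
      _ ≤ _ := by
          refine Real.exp_le_exp.2 ?_
          have hE0 : 0 ≤ E := by positivity
          have h1 : ((∑ m : M, (auxP seq m).card : ℕ) : ℝ) ≤ n * (2 * (Fintype.card M : ℝ) ^ c) := by
            calc ((∑ m : M, (auxP seq m).card : ℕ) : ℝ) ≤ ((n * L : ℕ) : ℝ) := by
                  have h2 := auxP_sum_le seq
                  have h3 : n * dilation seq ≤ n * L := Nat.mul_le_mul_left _ (by omega)
                  exact_mod_cast h2.trans h3
              _ ≤ _ := by push_cast; gcongr
          have h2 := aux_numeric (Fintype.card M : ℝ) c (by exact_mod_cast hM) hc l hl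
          calc _ ≤ 2 * E * (n * (2 * (Fintype.card M : ℝ) ^ c)) := by gcongr
            _ = n * (4 * (Fintype.card M : ℝ) ^ c * E) := by ring
            _ ≤ n * (Real.log l / 8) := by gcongr
            _ = _ := by ring
  calc (Nat.card {h : J → Fin L // ¬ IsGoodHash seq L l h} : ℝ)
      ≤ ∑ B ∈ G, ((occ B).card : ℝ) := by exact_mod_cast hcard
    _ ≤ ∑ B ∈ G, (L : ℝ) ^ n * Real.exp (-(n * Real.log l) / 4) * ∏ t, (z / L) ^ (B t).card :=
        Finset.sum_le_sum hterm
    _ ≤ ∑ B ∈ F, (L : ℝ) ^ n * Real.exp (-(n * Real.log l) / 4) * ∏ t, (z / L) ^ (B t).card := by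
        refine Finset.sum_le_sum_of_subset_of_nonneg (Finset.filter_subset _ _) ?_
        intro B _ _
        positivity
    _ = (L : ℝ) ^ n * Real.exp (-(n * Real.log l) / 4) * ∑ B ∈ F, ∏ t, (z / L) ^ (B t).card := by
        rw [Finset.mul_sum]
    _ ≤ (L : ℝ) ^ n * Real.exp (-(n * Real.log l) / 4) * Real.exp (n * Real.log l / 8) := by
        gcongr
    _ = _ := by
        rw [mul_assoc, ← Real.exp_add]
        congr 2; ring

/-- If `|M| ≥ 32`, `c ≥ 1`, `|J| ≤ |M|^c`, `2·|M|^c ≥ L ≥ C(J) + D(J)`,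
`l ≥ 150·c·ln|M| / ln ln|M|` and `k ≥ 1`, then the probability that none of `k`
independent uniformly random functions `h_1, …, h_k : J → {0,…,L−1}` is `(L,l)`-good for
`J` is at most `exp(−k·|J|·ln(l)/8)`. The `k` independent uniform functions are modelled
as a uniformly random tuple `H : Fin k → (J → Fin L)`, and the probability is expressed
as a ratio of counts. -/
theorem prob_no_hash_good_le {M J : Type*} [Fintype M] [DecidableEq M] [Fintype J]
    (seq : J → List M) (c : ℝ) (hc : 1 ≤ c) (hM : 32 ≤ Fintype.card M)
    (hJ : (Fintype.card J : ℝ) ≤ (Fintype.card M : ℝ) ^ c)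
    (L l : ℕ) (hL0 : 0 < L) (hl0 : 0 < l)
    (hL : (L : ℝ) ≤ 2 * (Fintype.card M : ℝ) ^ c)
    (hCD : congestion seq + dilation seq ≤ L)
    (hl : 150 * c * Real.log (Fintype.card M) / Real.log (Real.log (Fintype.card M)) ≤ (l : ℝ))
    (k : ℕ) (hk : 1 ≤ k) :
    (Nat.card {H : Fin k → J → Fin L // ∀ i, ¬ IsGoodHash seq L l (H i)} : ℝ) /
        (Nat.card (Fin k → J → Fin L) : ℝ) ≤
      Real.exp (-((k : ℝ) * (Fintype.card J : ℝ) * Real.log l) / 8) := by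
  have h1 := aux_single seq c hc hM L l hL0 hl0 hL hCD hl
  have hLp : (0 : ℝ) < L := by positivity
  have e : Nat.card {H : Fin k → J → Fin L // ∀ i, ¬ IsGoodHash seq L l (H i)} =
      Nat.card {h : J → Fin L // ¬ IsGoodHash seq L l h} ^ k := by
    rw [Nat.card_congr (Equiv.subtypePiEquivPi (β := fun _ : Fin k => J → Fin L)
      (p := fun {_} h => ¬ IsGoodHash seq L l h)), Nat.card_pi]
    simp
  have e2 : Nat.card (Fin k → J → Fin L) = (L ^ Fintype.card J) ^ k := by
    classical
    rw [Nat.card_pi]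
    simp [Nat.card_eq_fintype_card]
  rw [e, e2]
  push_cast
  rw [← div_pow]
  have e3 : Real.exp (-((k : ℝ) * (Fintype.card J : ℝ) * Real.log l) / 8) =
      Real.exp (-((Fintype.card J : ℝ) * Real.log l) / 8) ^ k := by
    rw [← Real.exp_nat_mul]
    congr 1; ring
  rw [e3]
  refine pow_le_pow_left₀ (by positivity) ?_ _
  rw [div_le_iff₀ (by positivity), mul_comm]
  exact h1
end

section
/- Let M be a finite set with |M| ≥ 32, let c ≥ 1 be a real number, and let I be a finite identifier set with |I| = ⌊|M|^c⌋. Let S be a finite nonempty set of finite sequences of elements of M (the domain set). Let L and l be positive integers with L ≤ 2·|M|^c and l ≥ 150·c·ln|M| / ln ln|M|, let b ≥ 1 be a real number, and let k be a positive integer with k ≥ 8·(b+1)·(ln|S| + (c+1)·ln|M|) / ln(l). If g_1, …, g_k are independent uniformly random functions from S × I to {0,…,L−1}, then with probability at least 1 − 2·|M|^(−b), the family (g_1, …, g_k) is (L,l)-good for S. -/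
open Finset

/-- The congestion of the job set `J` (a finite set of job indices of type `ι`, each job
`j` carrying the machine sequence `seq j`): the maximum over machines `m` of the total
number of pairs `(j,i)` with `j ∈ J` and `seq(j)_i = m`. -/
def congestionOn {M ι : Type*} [Fintype M] [DecidableEq M]
    (J : Finset ι) (seq : ι → List M) : ℕ :=
  Finset.univ.sup fun m : M => ∑ j ∈ J, (seq j).count m

/-- The dilation of the job set `J`: the maximum length of a job's machine sequence. -/
def dilationOn {M ι : Type*} (J : Finset ι) (seq : ι → List M) : ℕ :=
  J.sup fun j => (seq j).length

/-- A bad pattern for the job set `J` (a finite set of job indices of type `ι`) with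
machine sequences `seq` and parameters `L`, `l`. -/
def IsBadPatternOn {M ι : Type*} [Fintype M] (J : Finset ι) (seq : ι → List M)
    (L l : ℕ) (B : Fin (2 * L) → M → Finset (ι × ℕ)) : Prop :=
  (∀ T m, ∀ p ∈ B T m, p.1 ∈ J ∧ (seq p.1)[p.2]? = some m) ∧
  (∀ T m T' m', ∀ p ∈ B T m, ∀ p' ∈ B T' m', p.1 = p'.1 → T = T' ∧ m = m' ∧ p = p') ∧
  (∀ T m, B T m = ∅ ∨ l < (B T m).card) ∧
  J.card < 2 * ∑ T, ∑ m, (B T m).card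

/-- The bad pattern `B` occurs for `h` if `h(j) + i = T` for all `T`, `m`, `(j,i) ∈ B T m`. -/
def PatternOccursOn {M ι : Type*} [Fintype M]
    {L : ℕ} (B : Fin (2 * L) → M → Finset (ι × ℕ)) (h : ι → Fin L) : Prop :=
  ∀ T m, ∀ p ∈ B T m, (h p.1 : ℕ) + p.2 = (T : ℕ)

/-- `h` is `(L,l)`-good for the job set `J` if no bad pattern for `(J, L, l)` occurs for `h`. -/
def IsGoodHashOn {M ι : Type*} [Fintype M] (J : Finset ι) (seq : ι → List M)
    (L l : ℕ) (h : ι → Fin L) : Prop :=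
  ∀ B : Fin (2 * L) → M → Finset (ι × ℕ), IsBadPatternOn J seq L l B → ¬ PatternOccursOn B h

/-- The family `g : Fin k → (↥S × I → Fin L)` is `(L,l)`-good for the domain set `S`:
for every `S`-supported job set `J` (a finite set of (sequence ∈ S, identifier) pairs with
pairwise distinct identifiers, i.e. injective identifier map) with `L ≥ C(J) + D(J)`, at
least one induced hash function `h_i = g i` is `(L,l)`-good for `J`. -/
def IsGoodFamily {M I : Type*} [Fintype M] [DecidableEq M] [Fintype I]
    (S : Finset (List M)) (L l k : ℕ) (g : Fin k → (↥S × I → Fin L)) : Prop :=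
  ∀ J : Finset (↥S × I), Set.InjOn Prod.snd (J : Set (↥S × I)) →
    congestionOn J (fun p => (p.1 : List M)) + dilationOn J (fun p => (p.1 : List M)) ≤ L →
    ∃ i : Fin k, IsGoodHashOn J (fun p => (p.1 : List M)) L l (g i)

open Classical in
lemma aux_occ_card {M ι : Type*} [Fintype M] [Fintype ι] {L : ℕ} (hL : 0 < L)
    (B : Fin (2 * L) × M → Finset (ι × ℕ))
    (hB : ∀ x x', ∀ p ∈ B x, ∀ p' ∈ B x', p.1 = p'.1 → x = x' ∧ p = p') :
    ((univ.filter fun h : ι → Fin L => ∀ x, ∀ p ∈ B x, (h p.1 : ℕ) + p.2 = (x.1 : ℕ)).card : ℝ)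
      ≤ (L : ℝ) ^ (Fintype.card ι) * ∏ x, ((L : ℝ)⁻¹) ^ (B x).card := by
  set W : Finset ι := univ.biUnion fun x => (B x).image Prod.fst with hW
  have hWc : W.card = ∑ x, (B x).card := by
    rw [hW, card_biUnion]
    · refine sum_congr rfl fun x _ => card_image_of_injOn ?_
      intro p hp p' hp' h
      exact (hB x x p hp p' hp' h).2
    · intro x _ x' _ hne
      rw [Function.onFun, Finset.disjoint_left]
      intro j hj hj'
      rw [mem_image] at hj hj'
      obtain ⟨p, hp, rfl⟩ := hj
      obtain ⟨p', hp', h⟩ := hj'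
      exact hne (hB x x' p hp p' hp' h.symm).1
  have hex : ∀ j : ι, ∃ F : Finset (Fin L), (F.card : ℝ) ≤ (if j ∈ W then 1 else (L:ℝ)) ∧
      ∀ h : ι → Fin L, (∀ x, ∀ p ∈ B x, (h p.1 : ℕ) + p.2 = (x.1 : ℕ)) → h j ∈ F := by
    intro j
    by_cases hj : j ∈ W
    · rw [hW, mem_biUnion] at hj
      obtain ⟨x, _, hx⟩ := hj
      rw [mem_image] at hx
      obtain ⟨p, hp, rfl⟩ := hx
      have hj : p.1 ∈ W := by
        rw [hW, mem_biUnion]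
        exact ⟨x, mem_univ _, mem_image_of_mem _ hp⟩
      refine ⟨univ.filter fun y : Fin L => (y : ℕ) + p.2 = x.1, ?_, ?_⟩
      · rw [if_pos hj]
        have : (univ.filter fun y : Fin L => (y : ℕ) + p.2 = x.1).card ≤ 1 := by
          rw [card_le_one]
          intro a ha b hb
          simp only [mem_filter, mem_univ, true_and] at ha hb
          ext; omega
        exact_mod_cast this
      · intro h hh
        simp only [mem_filter, mem_univ, true_and]
        exact hh x p hp
    · exact ⟨univ, by simp [hj], fun h _ => mem_univ _⟩
  choose F hF1 hF2 using hex
  have h1 : (univ.filter fun h : ι → Fin L => ∀ x, ∀ p ∈ B x, (h p.1 : ℕ) + p.2 = (x.1 : ℕ))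
      ⊆ Fintype.piFinset F := by
    intro h hh
    simp only [mem_filter, mem_univ, true_and] at hh
    rw [Fintype.mem_piFinset]
    exact fun j => hF2 j h hh
  have hLp : (0:ℝ) < L := by exact_mod_cast hL
  calc _ ≤ ((Fintype.piFinset F).card : ℝ) := by exact_mod_cast card_le_card h1
    _ = ∏ j, ((F j).card : ℝ) := by rw [Fintype.card_piFinset]; push_cast; rfl
    _ ≤ ∏ j : ι, (if j ∈ W then 1 else (L:ℝ)) :=
        prod_le_prod (fun _ _ => by positivity) fun j _ => hF1 j
    _ = ∏ j : ι, ((L:ℝ) * (if j ∈ W then (L:ℝ)⁻¹ else 1)) := by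
        refine prod_congr rfl fun j _ => ?_
        split_ifs
        · field_simp
        · simp
    _ = _ := by
        rw [prod_mul_distrib, prod_const, prod_pow_eq_pow_sum, ← hWc, card_univ]
        congr 1
        rw [prod_ite_mem]
        simp

open Classical in
lemma aux_pairs {M ι : Type*} [Fintype M] [DecidableEq M]
    (J : Finset ι) (seq : ι → List M) (m : M) :
    ∃ P : Finset (ι × ℕ), P.card ≤ congestionOn J seq ∧
      ∀ p : ι × ℕ, p.1 ∈ J → (seq p.1)[p.2]? = some m → p ∈ P := by
  refine ⟨J.biUnion fun j => (((range (seq j).length).filter fun i => (seq j)[i]? = some m)).image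
    fun i => (j, i), ?_, ?_⟩
  · have h1 : ∀ j, ((range (seq j).length).filter fun i => (seq j)[i]? = some m).card
        = (seq j).count m := by
      intro j
      induction seq j using List.reverseRecOn with
      | nil => simp
      | append_singleton l a ih =>
        rw [List.length_append, List.length_singleton, range_add_one, filter_insert,
          List.count_append, ← ih]
        have h2 : (range l.length).filter (fun i => (l ++ [a])[i]? = some m)
            = (range l.length).filter (fun i => l[i]? = some m) := by
          refine filter_congr fun i hi => ?_
          rw [List.getElem?_append_left (mem_range.1 hi)]
        rw [h2]
        by_cases ham : a = m
        · simp [ham]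
        · simp [ham]
    calc _ ≤ ∑ j ∈ J, (seq j).count m := by
          refine card_biUnion_le.trans (sum_le_sum fun j _ => ?_)
          rw [← h1 j]
          exact card_image_le
      _ ≤ _ := Finset.le_sup (f := fun m : M => ∑ j ∈ J, (seq j).count m) (mem_univ m)
  · intro p hp h
    rw [mem_biUnion]
    refine ⟨p.1, hp, mem_image.2 ⟨p.2, ?_, rfl⟩⟩
    rw [mem_filter, mem_range]
    exact ⟨(List.getElem?_eq_some_iff.1 h).1, h⟩

open Classical in
lemma aux_gen {α : Type*} (P : Finset α) (L l : ℕ) (hL : 0 < L) (hP : P.card ≤ L)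
    (v : ℝ) (hv : 1 ≤ v) (hvl : v ^ 2 = l) :
    ∑ B ∈ P.powerset.filter (fun B => B = ∅ ∨ l < B.card), (v * (L:ℝ)⁻¹) ^ B.card
      ≤ 1 + (Real.exp 1 / v) ^ l := by
  have hLp : (0:ℝ) < L := by exact_mod_cast hL
  have hv0 : 0 < v := by linarith
  have h1 : ∀ B ∈ P.powerset.filter (fun B => B = ∅ ∨ l < B.card), (v * (L:ℝ)⁻¹) ^ B.card
      ≤ (if B = ∅ then 1 else 0) + (v⁻¹) ^ l * (l * (L:ℝ)⁻¹) ^ B.card := by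
    intro B hB
    rw [mem_filter] at hB
    rcases hB.2 with h | h
    · subst h
      simp
      positivity
    · have : (v * (L:ℝ)⁻¹) ^ B.card ≤ (v⁻¹) ^ l * (l * (L:ℝ)⁻¹) ^ B.card := by
        rw [← hvl, pow_two, mul_assoc, mul_pow v (v * (L:ℝ)⁻¹), ← mul_assoc]
        refine le_mul_of_one_le_left (by positivity) ?_
        rw [inv_pow, inv_mul_eq_div, one_le_div (by positivity)]
        exact pow_le_pow_right₀ hv h.le
      split_ifs <;> linarith
  calc _ ≤ ∑ B ∈ P.powerset.filter (fun B => B = ∅ ∨ l < B.card),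
        ((if B = ∅ then 1 else 0) + (v⁻¹) ^ l * (l * (L:ℝ)⁻¹) ^ B.card) := sum_le_sum h1
    _ ≤ ∑ B ∈ P.powerset, ((if B = ∅ then 1 else 0) + (v⁻¹) ^ l * (l * (L:ℝ)⁻¹) ^ B.card) := by
        refine sum_le_sum_of_subset_of_nonneg (filter_subset _ _) fun B _ _ => ?_
        split_ifs <;> positivity
    _ = 1 + (v⁻¹) ^ l * (l * (L:ℝ)⁻¹ + 1) ^ P.card := by
        rw [sum_add_distrib, ← mul_sum, ← Finset.sum_pow_mul_eq_add_pow]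
        simp
    _ ≤ 1 + (v⁻¹) ^ l * (Real.exp 1) ^ l := by
        gcongr
        calc (l * (L:ℝ)⁻¹ + 1) ^ P.card ≤ (Real.exp (l * (L:ℝ)⁻¹)) ^ P.card := by
              gcongr; exact Real.add_one_le_exp _
          _ ≤ (Real.exp (l * (L:ℝ)⁻¹)) ^ L := by
              refine pow_le_pow_right₀ (Real.one_le_exp (by positivity)) hP
          _ = _ := by
              rw [← Real.exp_nat_mul, ← Real.exp_nat_mul]
              congr 1
              field_simp
    _ = _ := by rw [← mul_pow, inv_mul_eq_div]

open Classical in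
lemma aux_single_s8 {M ι : Type*} [Fintype M] [DecidableEq M] [Fintype ι]
    (J : Finset ι) (hJ : J.Nonempty) (seq : ι → List M) (L l : ℕ) (hL : 0 < L)
    (hC : congestionOn J seq ≤ L) (u : ℝ) (hu : 2 ≤ u) (hul : u ^ 8 = l)
    (hε : 2 * L * (Fintype.card M : ℝ) * (Real.exp 1 / u ^ 4) ^ l ≤ 1 / 2) :
    ((univ.filter fun h : ι → Fin L => ¬ IsGoodHashOn J seq L l h).card : ℝ)
      ≤ (L : ℝ) ^ (Fintype.card ι) * (u⁻¹) ^ J.card := by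
  have hLp : (0:ℝ) < L := by exact_mod_cast hL
  have hu0 : 0 < u := by linarith
  choose P hP1 hP2 using aux_pairs J seq
  set Q : Fin (2 * L) × M → Finset (Finset (ι × ℕ)) := fun x =>
    (P x.2).powerset.filter (fun B => B = ∅ ∨ l < B.card) with hQ
  set E : (Fin (2 * L) × M → Finset (ι × ℕ)) → Prop := fun B =>
    (∀ x x', ∀ p ∈ B x, ∀ p' ∈ B x', p.1 = p'.1 → x = x' ∧ p = p') ∧
      J.card < 2 * ∑ x, (B x).card with hE
  set O : (Fin (2 * L) × M → Finset (ι × ℕ)) → Finset (ι → Fin L) := fun B =>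
    univ.filter fun h : ι → Fin L => ∀ x, ∀ p ∈ B x, (h p.1 : ℕ) + p.2 = (x.1 : ℕ) with hO
  have hsub : (univ.filter fun h : ι → Fin L => ¬ IsGoodHashOn J seq L l h)
      ⊆ ((Fintype.piFinset Q).filter E).biUnion O := by
    intro h hh
    simp only [mem_filter, mem_univ, true_and, IsGoodHashOn, not_forall, not_not] at hh
    obtain ⟨B, ⟨b1, b2, b3, b4⟩, hocc⟩ := hh
    rw [mem_biUnion]
    refine ⟨fun x => B x.1 x.2, ?_, ?_⟩
    · rw [mem_filter, Fintype.mem_piFinset]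
      refine ⟨fun x => ?_, ?_, ?_⟩
      · simp only [hQ, mem_filter, mem_powerset]
        exact ⟨fun p hp => hP2 x.2 p (b1 _ _ p hp).1 (b1 _ _ p hp).2, b3 _ _⟩
      · intro x x' p hp p' hp' hpp
        obtain ⟨q1, q2, q3⟩ := b2 _ _ _ _ p hp p' hp' hpp
        exact ⟨Prod.ext q1 q2, q3⟩
      · rw [Fintype.sum_prod_type]; exact b4
    · simp only [hO, mem_filter, mem_univ, true_and]
      intro x p hp
      exact hocc _ _ p hp
  have hterm : ∀ B ∈ (Fintype.piFinset Q).filter E, ((O B).card : ℝ) ≤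
      (L : ℝ) ^ (Fintype.card ι) * ((u⁻¹) ^ (2 * J.card) *
        ∏ x, (u ^ 4 * (L : ℝ)⁻¹) ^ (B x).card) := by
    intro B hB
    obtain ⟨_, e1, e2⟩ := mem_filter.1 hB
    refine (aux_occ_card hL B e1).trans ?_
    gcongr
    simp_rw [mul_pow, prod_mul_distrib]
    rw [← mul_assoc]
    refine le_mul_of_one_le_left (prod_nonneg fun _ _ => by positivity) ?_
    rw [prod_pow_eq_pow_sum, ← pow_mul, inv_pow, inv_mul_eq_div, one_le_div (by positivity)]
    exact pow_le_pow_right₀ (by linarith) (by omega)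
  have hprod : ∑ B ∈ Fintype.piFinset Q, ∏ x, (u ^ 4 * (L : ℝ)⁻¹) ^ (B x).card ≤ 2 := by
    rw [← prod_univ_sum Q (fun x b => (u ^ 4 * (L : ℝ)⁻¹) ^ b.card)]
    calc _ ≤ ∏ x : Fin (2 * L) × M, Real.exp ((Real.exp 1 / u ^ 4) ^ l) := by
          refine prod_le_prod (fun x _ => sum_nonneg fun _ _ => by positivity) fun x _ => ?_
          have hg := aux_gen (P x.2) L l hL ((hP1 _).trans hC) (u ^ 4)
            (one_le_pow₀ (by linarith)) (by rw [← hul]; ring)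
          refine le_trans (le_of_eq ?_) (hg.trans ?_)
          · refine Finset.sum_congr ?_ fun _ _ => rfl
            ext B
            simp [hQ]
          · rw [add_comm]
            exact Real.add_one_le_exp _
      _ = Real.exp (2 * L * (Fintype.card M : ℝ) * (Real.exp 1 / u ^ 4) ^ l) := by
          rw [prod_const, ← Real.exp_nat_mul]
          simp
      _ ≤ Real.exp (1 / 2) := Real.exp_le_exp.2 hε
      _ ≤ 2 := by
          rw [← Real.le_log_iff_exp_le (by norm_num)]
          linarith [Real.log_two_gt_d9]
  have hN : 1 ≤ J.card := hJ.card_pos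
  calc _ ≤ ((((Fintype.piFinset Q).filter E).biUnion O).card : ℝ) := by
        exact_mod_cast card_le_card hsub
    _ ≤ ∑ B ∈ (Fintype.piFinset Q).filter E, ((O B).card : ℝ) := by
        exact_mod_cast card_biUnion_le
    _ ≤ ∑ B ∈ (Fintype.piFinset Q).filter E, (L : ℝ) ^ (Fintype.card ι) * ((u⁻¹) ^ (2 * J.card) *
        ∏ x, (u ^ 4 * (L : ℝ)⁻¹) ^ (B x).card) := sum_le_sum hterm
    _ ≤ ∑ B ∈ Fintype.piFinset Q, (L : ℝ) ^ (Fintype.card ι) * ((u⁻¹) ^ (2 * J.card) *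
        ∏ x, (u ^ 4 * (L : ℝ)⁻¹) ^ (B x).card) := by
        refine sum_le_sum_of_subset_of_nonneg (filter_subset _ _) fun B _ _ => ?_
        have : 0 ≤ ∏ x, (u ^ 4 * (L : ℝ)⁻¹) ^ (B x).card := prod_nonneg fun _ _ => by positivity
        positivity
    _ ≤ (L : ℝ) ^ (Fintype.card ι) * ((u⁻¹) ^ (2 * J.card) * 2) := by
        rw [← mul_sum, ← mul_sum]
        gcongr
    _ ≤ _ := by
        gcongr
        rw [two_mul, pow_add, mul_assoc]
        refine mul_le_of_le_one_right (by positivity) ?_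
        rw [inv_pow, inv_mul_le_one₀ (by positivity)]
        calc (2:ℝ) ≤ u ^ 1 := by simpa using hu
          _ ≤ u ^ J.card := pow_le_pow_right₀ (by linarith) hN

lemma aux_num (x c : ℝ) (hx : 3 ≤ x) (hc : 1 ≤ c) (l : ℕ)
    (hl : 150 * c * x / Real.log x ≤ (l : ℝ)) :
    256 ≤ (l : ℝ) ∧ 37 * (c * x) ≤ l * (Real.log l / 2 - 1) := by
  have hx0 : 0 < x := by linarith
  have hlogx : 1 ≤ Real.log x := by
    rw [Real.le_log_iff_exp_le hx0]; linarith [Real.exp_one_lt_d9]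
  have half : ∀ y : ℝ, 0 < y → Real.log y ≤ y / 2 := by
    intro y hy
    have h1 := Real.log_le_sub_one_of_pos (show 0 < y / 2 by positivity)
    rw [Real.log_div hy.ne' (by norm_num)] at h1
    linarith [Real.log_two_lt_d9]
  have hly : 0 < Real.log x := by linarith
  have a1 := half x hx0
  have a2 := half _ hly
  rw [div_le_iff₀ hly] at hl
  have h300 : 300 * c ≤ (l:ℝ) := by
    have hl0 : (0:ℝ) ≤ l := by positivity
    have : 150 * c * x ≤ l * (x / 2) := hl.trans (by gcongr)
    have : 300 * c * x ≤ l * x := by linarith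
    exact le_of_mul_le_mul_right this hx0
  have hl0 : (0:ℝ) < l := by linarith
  refine ⟨by linarith, ?_⟩
  have hlogl : 2 + Real.log x / 2 ≤ Real.log l := by
    have h1 : Real.log (150 * c * x) ≤ Real.log (l * Real.log x) :=
      Real.log_le_log (by positivity) hl
    rw [Real.log_mul (by positivity) hx0.ne', Real.log_mul hl0.ne' hly.ne'] at h1
    have h2 : 2 ≤ Real.log (150 * c) := by
      rw [Real.le_log_iff_exp_le (by positivity)]
      have : Real.exp 2 = Real.exp 1 * Real.exp 1 := by rw [← Real.exp_add]; norm_num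
      nlinarith [Real.exp_one_lt_d9, Real.exp_pos 1]
    linarith
  have h3 : l * (Real.log x / 4) ≤ l * (Real.log l / 2 - 1) := by
    gcongr; linarith
  have : 0 < c * x := by positivity
  nlinarith

set_option maxHeartbeats 2000000 in
/-- Let `|M| ≥ 32`, `c ≥ 1`, `|I| = ⌊|M|^c⌋`, `S` a nonempty finite set of machine
sequences, `L ≤ 2·|M|^c`, `l ≥ 150·c·ln|M| / ln ln|M|`, `b ≥ 1` and
`k ≥ 8·(b+1)·(ln|S| + (c+1)·ln|M|) / ln(l)`. If `g_1, …, g_k` are independent uniformly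
random functions from `S × I` to `{0,…,L−1}` (modelled as a uniformly random tuple
`g : Fin k → (↥S × I → Fin L)`), then with probability at least `1 − 2·|M|^(−b)` the
family `(g_1, …, g_k)` is `(L,l)`-good for `S`. -/
theorem prob_family_good_ge {M I : Type*} [Fintype M] [DecidableEq M] [Fintype I]
    (c : ℝ) (hc : 1 ≤ c) (hM : 32 ≤ Fintype.card M)
    (hI : Fintype.card I = ⌊(Fintype.card M : ℝ) ^ c⌋₊)
    (S : Finset (List M)) (hS : S.Nonempty)
    (L l : ℕ) (hL0 : 0 < L) (hl0 : 0 < l)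
    (hL : (L : ℝ) ≤ 2 * (Fintype.card M : ℝ) ^ c)
    (hl : 150 * c * Real.log (Fintype.card M) / Real.log (Real.log (Fintype.card M)) ≤ (l : ℝ))
    (b : ℝ) (hb : 1 ≤ b) (k : ℕ) (hk0 : 0 < k)
    (hk : 8 * (b + 1) * (Real.log (S.card : ℝ) + (c + 1) * Real.log (Fintype.card M)) /
        Real.log l ≤ (k : ℝ)) :
    1 - 2 * (Fintype.card M : ℝ) ^ (-b) ≤
      (Nat.card {g : Fin k → (↥S × I → Fin L) // IsGoodFamily S L l k g} : ℝ) /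
        (Nat.card (Fin k → (↥S × I → Fin L)) : ℝ) := by
  classical
  set Mr : ℝ := (Fintype.card M : ℝ) with hMr
  have hM32 : (32:ℝ) ≤ Mr := by rw [hMr]; exact_mod_cast hM
  have hM0 : 0 < Mr := by linarith
  set x := Real.log Mr with hx
  have hx3 : 3 ≤ x := by
    have h1 : Real.log 32 ≤ x := Real.log_le_log (by norm_num) hM32
    have h2 : Real.log 32 = 5 * Real.log 2 := by
      rw [show (32:ℝ) = 2 ^ 5 by norm_num, Real.log_pow]; norm_num
    linarith [Real.log_two_gt_d9]
  obtain ⟨hl256, hl37⟩ := aux_num x c hx3 hc l hl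
  have hlp : (0:ℝ) < l := by linarith
  have hlogl : 0 < Real.log l := Real.log_pos (by linarith)
  have hpow : ∀ y : ℝ, Mr ^ y = Real.exp (x * y) := fun y => Real.rpow_def_of_pos hM0 y
  set u : ℝ := Real.exp (Real.log l / 8) with hu
  have hu0 : 0 < u := Real.exp_pos _
  have hul : u ^ 8 = l := by
    rw [hu, ← Real.exp_nat_mul]
    push_cast
    rw [mul_div_cancel₀ _ (by norm_num : (8:ℝ) ≠ 0), Real.exp_log hlp]
  have hu2 : 2 ≤ u := by
    by_contra hcon
    push Not at hcon
    have : u ^ 8 < 2 ^ 8 := by gcongr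
    rw [hul] at this
    linarith
  have hε : 2 * L * (Fintype.card M : ℝ) * (Real.exp 1 / u ^ 4) ^ l ≤ 1 / 2 := by
    have h1 : (Real.exp 1 / u ^ 4) ^ l = Real.exp (-(l * (Real.log l / 2 - 1))) := by
      rw [hu, ← Real.exp_nat_mul, ← Real.exp_sub, ← Real.exp_nat_mul]
      congr 1
      push_cast
      ring
    have h2 : (Real.exp 1 / u ^ 4) ^ l ≤ Real.exp (-(37 * (c * x))) := by
      rw [h1]; exact Real.exp_le_exp.2 (by linarith)
    have hMe : Mr = Real.exp x := (Real.exp_log hM0).symm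
    have hcx : x ≤ c * x := by nlinarith
    calc 2 * L * (Fintype.card M : ℝ) * (Real.exp 1 / u ^ 4) ^ l
        ≤ 2 * (2 * Mr ^ c) * Mr * Real.exp (-(37 * (c * x))) := by gcongr
      _ = 4 * Real.exp (x * c + x - 37 * (c * x)) := by
          rw [hpow, Real.exp_sub, Real.exp_add, Real.exp_neg, ← hMe]
          field_simp
          ring
      _ ≤ 4 * Real.exp (-x) := by
          gcongr; linarith
      _ = 4 * Mr⁻¹ := by rw [Real.exp_neg, ← hMe]
      _ ≤ 4 * (32:ℝ)⁻¹ := by gcongr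
      _ ≤ 1 / 2 := by norm_num
  set n := Fintype.card (↥S × I) with hn
  have hLp : (0:ℝ) < L := by exact_mod_cast hL0
  set t : ℝ := Mr ^ (-b) with ht
  set A : ℝ := Real.log (S.card : ℝ) + (c + 1) * x with hA
  set q : ℝ := (u⁻¹) ^ k with hq
  have hq0 : 0 ≤ q := by positivity
  have hScard : (1:ℝ) ≤ S.card := by exact_mod_cast hS.card_pos
  have hlogS : 0 ≤ Real.log (S.card : ℝ) := Real.log_nonneg hScard
  have hnq : n * q ≤ t := by
    have h1 : q ≤ Real.exp (-((b + 1) * A)) := by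
      rw [hq, hu, ← Real.exp_neg, ← Real.exp_nat_mul]
      refine Real.exp_le_exp.2 ?_
      rw [div_le_iff₀ hlogl] at hk
      linarith
    have h2 : (n:ℝ) ≤ Real.exp (Real.log (S.card : ℝ) + x * c) := by
      rw [Real.exp_add, Real.exp_log (by linarith), ← hpow, hn, Fintype.card_prod,
        Fintype.card_coe, hI]
      push_cast
      gcongr
      exact Nat.floor_le (by positivity)
    calc n * q ≤ Real.exp (Real.log (S.card : ℝ) + x * c) * Real.exp (-((b + 1) * A)) := by
          gcongr
      _ = Real.exp (Real.log (S.card : ℝ) + x * c - (b + 1) * A) := by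
          rw [← Real.exp_add, sub_eq_add_neg]
      _ ≤ t := by
          rw [ht, hpow]
          refine Real.exp_le_exp.2 ?_
          have hAx : x ≤ A := by rw [hA]; nlinarith
          have hbA : b * x ≤ b * A := by gcongr
          have : (b + 1) * A = b * A + Real.log (S.card : ℝ) + x * c + x := by rw [hA]; ring
          rw [this]; linarith
  have ht1 : t ≤ 1 / 2 := by
    calc t ≤ Mr ^ (-1 : ℝ) := Real.rpow_le_rpow_of_exponent_le (by linarith) (by linarith)
      _ = Mr⁻¹ := Real.rpow_neg_one _
      _ ≤ (32:ℝ)⁻¹ := by gcongr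
      _ ≤ 1 / 2 := by norm_num
  have ht0 : 0 ≤ t := by positivity
  have hsum : (1 + q) ^ n ≤ 1 + 2 * t := by
    calc (1 + q) ^ n ≤ (Real.exp q) ^ n := by
          gcongr; rw [add_comm]; exact Real.add_one_le_exp _
      _ = Real.exp (n * q) := by rw [← Real.exp_nat_mul]
      _ ≤ Real.exp t := Real.exp_le_exp.2 hnq
      _ ≤ 1 / (1 - t) := Real.exp_bound_div_one_sub_of_interval ht0 (by linarith)
      _ ≤ 1 + 2 * t := by
          rw [div_le_iff₀ (by linarith)]; nlinarith
  set Bad : Finset (Fin k → (↥S × I → Fin L)) :=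
    univ.filter fun g => ¬ IsGoodFamily S L l k g with hBad
  set sq : ↥S × I → List M := fun p => (p.1 : List M) with hsq
  set BJ : Finset (↥S × I) → Finset (↥S × I → Fin L) := fun J =>
    univ.filter fun h => ¬ IsGoodHashOn J sq L l h with hBJ
  set JJ : Finset (Finset (↥S × I)) :=
    univ.filter fun J => J.Nonempty ∧ congestionOn J sq ≤ L with hJJ
  have hsub : Bad ⊆ JJ.biUnion fun J => Fintype.piFinset fun _ : Fin k => BJ J := by
    intro g hg
    simp only [hBad, mem_filter, mem_univ, true_and, IsGoodFamily, not_forall, not_exists] at hg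
    obtain ⟨J, _, hcong, hbad⟩ := hg
    rw [mem_biUnion]
    refine ⟨J, ?_, ?_⟩
    · simp only [hJJ, mem_filter, mem_univ, true_and]
      refine ⟨?_, le_trans (Nat.le_add_right _ _) hcong⟩
      rw [nonempty_iff_ne_empty]
      rintro rfl
      refine hbad ⟨0, hk0⟩ ?_
      intro B hB _
      obtain ⟨b1, _, _, b4⟩ := hB
      have : ∀ T m, B T m = ∅ := by
        intro T m
        rw [eq_empty_iff_forall_notMem]
        intro p hp
        exact absurd (b1 T m p hp).1 (notMem_empty _)
      simp [this] at b4
    · rw [Fintype.mem_piFinset]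
      intro i
      simp only [hBJ, mem_filter, mem_univ, true_and]
      exact hbad i
  set Tot : ℝ := ((L:ℝ) ^ n) ^ k with hTot
  have hTot0 : 0 < Tot := by positivity
  have hBadle : (Bad.card : ℝ) ≤ Tot * (2 * t) := by
    calc (Bad.card : ℝ) ≤ ((JJ.biUnion fun J => Fintype.piFinset fun _ : Fin k => BJ J).card : ℝ) := by
          exact_mod_cast card_le_card hsub
      _ ≤ ∑ J ∈ JJ, ((Fintype.piFinset fun _ : Fin k => BJ J).card : ℝ) := by
          exact_mod_cast card_biUnion_le
      _ ≤ ∑ J ∈ JJ, Tot * q ^ J.card := by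
          refine sum_le_sum fun J hJ => ?_
          simp only [hJJ, mem_filter, mem_univ, true_and] at hJ
          have h1 : ((BJ J).card : ℝ) ≤ (L:ℝ) ^ n * (u⁻¹) ^ J.card := by
            have h0 := aux_single_s8 J hJ.1 sq L l hL0 hJ.2 u hu2 hul hε
            refine le_trans (le_of_eq ?_) h0
            congr 2
            ext h
            simp only [hBJ, mem_filter, mem_univ]
          rw [Fintype.card_piFinset]
          simp only [prod_const, card_univ, Fintype.card_fin]
          push_cast
          calc ((BJ J).card : ℝ) ^ k ≤ ((L:ℝ) ^ n * (u⁻¹) ^ J.card) ^ k := by gcongr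
            _ = Tot * q ^ J.card := by
              rw [mul_pow, hTot, hq, ← pow_mul (u⁻¹), ← pow_mul (u⁻¹), mul_comm k]
      _ ≤ ∑ J ∈ (univ : Finset (↥S × I)).powerset.erase ∅, Tot * q ^ J.card := by
          refine sum_le_sum_of_subset_of_nonneg ?_ fun J _ _ => by positivity
          intro J hJ
          simp only [hJJ, mem_filter, mem_univ, true_and] at hJ
          simp [hJ.1.ne_empty]
      _ = Tot * ((1 + q) ^ n - 1) := by
          rw [← mul_sum]
          congr 1
          have h1 := Finset.sum_pow_mul_eq_add_pow q 1 (univ : Finset (↥S × I))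
          simp only [one_pow, mul_one, card_univ] at h1
          rw [add_comm 1 q, ← h1, ← add_sum_erase _ _ (empty_mem_powerset _)]
          simp
      _ ≤ _ := by
          gcongr; linarith
  have hcardTot : (Nat.card (Fin k → (↥S × I → Fin L)) : ℝ) = Tot := by
    rw [Nat.card_eq_fintype_card, Fintype.card_fun, Fintype.card_fun]
    simp [hTot, hn]
  have hgood : (Nat.card {g : Fin k → (↥S × I → Fin L) // IsGoodFamily S L l k g} : ℝ)
      = Tot - Bad.card := by
    rw [Nat.card_eq_fintype_card, Fintype.card_subtype, ← hcardTot, eq_sub_iff_add_eq,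
      Nat.card_eq_fintype_card, ← card_univ]
    exact_mod_cast card_filter_add_card_filter_not (s := univ)
      (fun g : Fin k → (↥S × I → Fin L) => IsGoodFamily S L l k g)
  rw [hcardTot, hgood, le_div_iff₀ hTot0]
  linarith
end

section
/- Fix a finite machine set M, a job set J over M, positive integers L and l, a function h : J → {0,…,L−1}, and a time horizon t_max. In any greedy weak-scheduler execution up to time t_max, for all times t' ≤ t ≤ t_max and every job j ∈ J: if j is behind schedule at time t' (that is, pos_{t'}(j) < len(j) and h(j) + pos_{t'}(j) < ⌊t'/l⌋), then st_t(j) = 1 (the job is eliminated at time t). -/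
open Finset

/-- A greedy weak-scheduler execution up to time `tmax`, for the job set given by the
finite type `J` with machine sequences `seq : J → List M`, small time step count `l`, and
hash function `h : J → Fin L`. `pos t j` is the position of job `j` at time `t` and
`st t j ∈ {0,1}` its state (`1` = eliminated). At each step `t → t+1` an adversary first
pushes jobs forward to positions `pos'`; with `T := ⌊t/l⌋` and
`Q m := { j : st t j = 0, pos' j < len j, seq(j)_{pos' j} = m, h j + pos' j = T }`:
if `t ≡ 0 (mod l)` and `|Q m| > l` every `j ∈ Q m` is dropped (`st (t+1) j = 1`);
if `0 < |Q m| ≤ l` machine `m` works on exactly one job of `Q m` (its position is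
incremented from `pos'`); all other jobs keep their pushed positions, and all jobs not
dropped keep their states. -/
def IsGreedyExec {M J : Type*} [Fintype M] [DecidableEq M] [Fintype J]
    (seq : J → List M) {L : ℕ} (l : ℕ) (h : J → Fin L) (tmax : ℕ)
    (pos : ℕ → J → ℕ) (st : ℕ → J → Fin 2) : Prop :=
  (∀ t ≤ tmax, ∀ j, pos t j ≤ (seq j).length) ∧
  (∀ j, st 0 j = 0) ∧
  (∀ t < tmax, ∃ pos' : J → ℕ,
    (∀ j, pos t j ≤ pos' j ∧ pos' j ≤ (seq j).length) ∧
    (let Q : M → Finset J := fun m =>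
      Finset.univ.filter fun j =>
        st t j = 0 ∧ pos' j < (seq j).length ∧ (seq j)[pos' j]? = some m ∧
          (h j : ℕ) + pos' j = t / l
     ∃ worksel : M → Option J,
      (∀ m j, worksel m = some j → j ∈ Q m ∧ (Q m).card ≤ l) ∧
      (∀ m, 0 < (Q m).card → (Q m).card ≤ l → (worksel m).isSome) ∧
      (∀ j, (∃ m, worksel m = some j) → pos (t + 1) j = pos' j + 1) ∧
      (∀ j, (¬ ∃ m, worksel m = some j) → pos (t + 1) j = pos' j) ∧
      (∀ j, (t % l = 0 ∧ ∃ m, l < (Q m).card ∧ j ∈ Q m) → st (t + 1) j = 1) ∧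
      (∀ j, (¬ (t % l = 0 ∧ ∃ m, l < (Q m).card ∧ j ∈ Q m)) → st (t + 1) j = st t j)))

theorem div_mod_step (t l : ℕ) (hl : 0 < l) :
    ((t + 1) % l ≠ 0 ∧ (t + 1) / l = t / l ∧ (t + 1) % l = t % l + 1) ∨
    ((t + 1) % l = 0 ∧ (t + 1) / l = t / l + 1 ∧ t % l + 1 = l) := by
  have h1 := Nat.div_add_mod t l
  have h2 := Nat.mod_lt t hl
  by_cases hk : t % l + 1 = l
  · right
    have : t + 1 = l * (t / l + 1) := by rw [mul_add]; omega
    refine ⟨?_, ?_, hk⟩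
    · rw [this]; exact Nat.mul_mod_right _ _
    · conv_lhs => rw [this]
      exact Nat.mul_div_cancel_left _ hl
  · left
    have e : t + 1 = (t % l + 1) + l * (t / l) := by omega
    have hm : (t + 1) % l = t % l + 1 := by
      conv_lhs => rw [e]
      rw [Nat.add_mul_mod_self_left]; exact Nat.mod_eq_of_lt (by omega)
    refine ⟨by omega, ?_, hm⟩
    conv_lhs => rw [e]
    rw [Nat.add_mul_div_left _ _ hl, Nat.div_eq_of_lt (by omega)]; omega

theorem exec_inv {M J : Type*} [Fintype M] [DecidableEq M] [Fintype J]
    (seq : J → List M) (L l : ℕ) (hl0 : 0 < l) (h : J → Fin L)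
    (tmax : ℕ) (pos : ℕ → J → ℕ) (st : ℕ → J → Fin 2)
    (hexec : IsGreedyExec seq l h tmax pos st) (t : ℕ) (ht : t ≤ tmax) :
    (∀ j, st t j = 0 → pos t j < (seq j).length → t / l ≤ (h j : ℕ) + pos t j) ∧
    (t % l ≠ 0 → ∀ m, (Finset.univ.filter fun j =>
        st t j = 0 ∧ pos t j < (seq j).length ∧ (seq j)[pos t j]? = some m ∧
          (h j : ℕ) + pos t j = t / l).card + t % l ≤ l) := by
  classical
  induction t with
  | zero => simp
  | succ t ih =>
    obtain ⟨ihA, ihB⟩ := ih (by omega)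
    obtain ⟨pos', hp, worksel, hw1, hw2, hw3, hw4, hd1, hd2⟩ := hexec.2.2 t (by omega)
    set Q : M → Finset J := fun m =>
      Finset.univ.filter fun j =>
        st t j = 0 ∧ pos' j < (seq j).length ∧ (seq j)[pos' j]? = some m ∧
          (h j : ℕ) + pos' j = t / l with hQ
    have memQ : ∀ m j, j ∈ Q m ↔ (st t j = 0 ∧ pos' j < (seq j).length ∧
        (seq j)[pos' j]? = some m ∧ (h j : ℕ) + pos' j = t / l) := by
      intro m j; simp [hQ]
    clear_value Q
    have hst : ∀ j, st (t+1) j = 0 → st t j = 0 ∧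
        ¬ (t % l = 0 ∧ ∃ m, l < (Q m).card ∧ j ∈ Q m) := by
      intro j hj
      by_cases hc : t % l = 0 ∧ ∃ m, l < (Q m).card ∧ j ∈ Q m
      · rw [hd1 j hc] at hj; exact absurd hj (by decide)
      · exact ⟨by rw [← hd2 j hc]; exact hj, hc⟩
    have hge : ∀ j, pos t j ≤ pos (t+1) j := by
      intro j
      have := (hp j).1
      by_cases hc : ∃ m, worksel m = some j
      · rw [hw3 j hc]; omega
      · rw [hw4 j hc]; omega
    have A : ∀ j, st (t+1) j = 0 → pos (t+1) j < (seq j).length →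
        t / l ≤ (h j : ℕ) + pos (t+1) j := by
      intro j hj hl
      have := hge j
      have := ihA j (hst j hj).1 (by omega)
      omega
    set R : M → Finset J := fun m => Finset.univ.filter fun j =>
        st (t+1) j = 0 ∧ pos (t+1) j < (seq j).length ∧ (seq j)[pos (t+1) j]? = some m ∧
          (h j : ℕ) + pos (t+1) j = t / l with hR
    have memR : ∀ m j, j ∈ R m ↔ (st (t+1) j = 0 ∧ pos (t+1) j < (seq j).length ∧
        (seq j)[pos (t+1) j]? = some m ∧ (h j : ℕ) + pos (t+1) j = t / l) := by
      intro m j; simp [hR]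
    have hnw : ∀ m j, j ∈ R m → ¬ ∃ m, worksel m = some j := by
      rintro m j hj ⟨m', hm'⟩
      have h1 := ((memQ _ _).1 (hw1 m' j hm').1).2.2.2
      have h2 := ((memR _ _).1 hj).2.2.2
      rw [hw3 j ⟨m', hm'⟩] at h2
      omega
    have hRQ : ∀ m, R m ⊆ Q m := by
      intro m j hj
      have hn := hw4 j (hnw m j hj)
      have h2 := (memR _ _).1 hj
      rw [hn] at h2
      exact (memQ _ _).2 ⟨(hst j h2.1).1, h2.2⟩
    have hQc : t % l ≠ 0 → ∀ m, (Q m).card + t % l ≤ l := by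
      intro h0 m
      refine le_trans (Nat.add_le_add_right (Finset.card_le_card ?_) _) (ihB h0 m)
      intro j hj
      obtain ⟨a, b, c, d⟩ := (memQ _ _).1 hj
      have h1 := (hp j).1
      have h2 := ihA j a (by omega)
      have e : pos t j = pos' j := by omega
      simp only [Finset.mem_filter, Finset.mem_univ, true_and, e]
      exact ⟨a, b, c, d⟩
    have hk := Nat.mod_lt t hl0
    have B : ∀ m, (R m).card + (t % l + 1) ≤ l := by
      intro m
      rcases Finset.eq_empty_or_nonempty (R m) with he | ⟨j, hj⟩
      · rw [he, Finset.card_empty]; omega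
      · have hjQ := hRQ m hj
        have hle : (Q m).card + t % l ≤ l := by
          by_cases h0 : t % l = 0
          · by_contra hc
            exact (hst j ((memR _ _).1 hj).1).2 ⟨h0, m, by omega, hjQ⟩
          · exact hQc h0 m
        have hs := hw2 m (Finset.card_pos.2 ⟨j, hjQ⟩) (by omega)
        obtain ⟨i, hi⟩ := Option.isSome_iff_exists.1 hs
        have : (R m).card < (Q m).card := Finset.card_lt_card
          ((Finset.ssubset_iff_of_subset (hRQ m)).2
            ⟨i, (hw1 m i hi).1, fun hiR => hnw m i hiR ⟨m, hi⟩⟩)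
        omega
    rcases div_mod_step t l hl0 with ⟨h1, h2, h3⟩ | ⟨h1, h2, h3⟩
    · rw [h2, h3]
      exact ⟨A, fun _ => B⟩
    · refine ⟨?_, fun hh => absurd h1 hh⟩
      intro j hj hlen
      rw [h2]
      have h4 := A j hj hlen
      by_contra hc
      have hmem : j ∈ R ((seq j)[pos (t+1) j]) :=
        (memR _ _).2 ⟨hj, hlen, List.getElem?_eq_getElem hlen, by omega⟩
      have := Finset.card_pos.2 ⟨j, hmem⟩
      have := B ((seq j)[pos (t+1) j])
      omega

/-- In any greedy weak-scheduler execution up to time `tmax`, for all times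
`t' ≤ t ≤ tmax` and every job `j`: if `j` is behind schedule at time `t'` (that is,
`pos_{t'}(j) < len(j)` and `h(j) + pos_{t'}(j) < ⌊t'/l⌋`), then `j` is eliminated at
time `t` (`st t j = 1`). -/
theorem behind_schedule_eliminated {M J : Type*} [Fintype M] [DecidableEq M] [Fintype J]
    (seq : J → List M) (L l : ℕ) (hL0 : 0 < L) (hl0 : 0 < l) (h : J → Fin L)
    (tmax : ℕ) (pos : ℕ → J → ℕ) (st : ℕ → J → Fin 2)
    (hexec : IsGreedyExec seq l h tmax pos st)
    (t' t : ℕ) (ht't : t' ≤ t) (ht : t ≤ tmax) (j : J)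
    (hpos : pos t' j < (seq j).length)
    (hbehind : (h j : ℕ) + pos t' j < t' / l) :
    st t j = 1 := by
  induction t, ht't using Nat.le_induction with
  | base =>
    by_contra hc
    have h0 : st t' j = 0 := by
      have := (st t' j).isLt
      ext
      have : (st t' j : ℕ) ≠ 1 := fun hh => hc (Fin.ext hh)
      simp; omega
    have := (exec_inv seq L l hl0 h tmax pos st hexec t' ht).1 j h0 hpos
    omega
  | succ t htt ih =>
    have ih := ih (by omega)
    obtain ⟨pos', hp, worksel, hw1, hw2, hw3, hw4, hd1, hd2⟩ := hexec.2.2 t (by omega)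
    rw [hd2 j ?_, ih]
    rintro ⟨_, m, _, hj⟩
    have := (Finset.mem_filter.1 hj).2.1
    rw [ih] at this
    exact absurd this (by decide)
end

section
/- Fix a finite machine set M, a job set J over M, positive integers L and l with L ≥ D(J), and a function h : J → {0,…,L−1}. In any greedy weak-scheduler execution up to time 2·L·l, every job j that is live at time 2·L·l (st_{2Ll}(j) = 0) is complete (pos_{2Ll}(j) = len(j)). -/
open Finset

open Classical in
/-- Live jobs waiting at machine `m` for large time step `T`. -/
noncomputable def waitSet {M J : Type*} [Fintype J] (seq : J → List M) {L : ℕ} (h : J → Fin L)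
    (pos : J → ℕ) (st : J → Fin 2) (T : ℕ) (m : M) : Finset J :=
  Finset.univ.filter fun j =>
    st j = 0 ∧ pos j < (seq j).length ∧ (seq j)[pos j]? = some m ∧ (h j : ℕ) + pos j = T

/-- Live incomplete jobs are not behind large time step `T`. -/
def OnTrack {M J : Type*} (seq : J → List M) {L : ℕ} (h : J → Fin L)
    (pos : J → ℕ) (st : J → Fin 2) (T : ℕ) : Prop :=
  ∀ j, st j = 0 → pos j < (seq j).length → T ≤ (h j : ℕ) + pos j

theorem step_lemma {M J : Type*} [Fintype M] [DecidableEq M] [Fintype J]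
    (seq : J → List M) (L l : ℕ) (h : J → Fin L)
    (pos : ℕ → J → ℕ) (st : ℕ → J → Fin 2) (tmax : ℕ)
    (hexec : IsGreedyExec seq l h tmax pos st) (T s : ℕ) (hs : s < l)
    (ht : T * l + s < tmax)
    (h1 : OnTrack seq h (pos (T * l + s)) (st (T * l + s)) T)
    (h2 : s = 0 ∨ ∀ m, (waitSet seq h (pos (T * l + s)) (st (T * l + s)) T m).card + s ≤ l) :
    OnTrack seq h (pos (T * l + s + 1)) (st (T * l + s + 1)) T ∧
    ∀ m, (waitSet seq h (pos (T * l + s + 1)) (st (T * l + s + 1)) T m).card + (s + 1) ≤ l := by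
  obtain ⟨-, -, hstep⟩ := hexec
  obtain ⟨pos', hp, worksel, w1, w2, w3, w4, w5, w6⟩ := hstep _ ht
  have hdiv : (T * l + s) / l = T := by
    rw [Nat.mul_comm, Nat.mul_add_div (by omega), Nat.div_eq_of_lt hs, Nat.add_zero]
  have hmod : (T * l + s) % l = s := by
    rw [Nat.mul_comm, Nat.mul_add_mod, Nat.mod_eq_of_lt hs]
  rw [hdiv] at w1 w2 w5 w6
  rw [hmod] at w5 w6
  generalize T * l + s = t at *
  set Q : M → Finset J := fun m =>
      Finset.univ.filter fun j =>
        st t j = 0 ∧ pos' j < (seq j).length ∧ (seq j)[pos' j]? = some m ∧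
          (h j : ℕ) + pos' j = T with hQ
  have memQ : ∀ m j, j ∈ Q m ↔ st t j = 0 ∧ pos' j < (seq j).length ∧
      (seq j)[pos' j]? = some m ∧ (h j : ℕ) + pos' j = T := by
    intro m j; simp [hQ]
  have live : ∀ j, st (t+1) j = 0 →
      st t j = 0 ∧ ¬ (s = 0 ∧ ∃ m, l < (Q m).card ∧ j ∈ Q m) := by
    intro j hj
    by_cases hd : s = 0 ∧ ∃ m, l < (Q m).card ∧ j ∈ Q m
    · have := w5 j hd
      rw [hj] at this
      exact absurd this (by decide)
    · exact ⟨(w6 j hd) ▸ hj, hd⟩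
  have posle : ∀ j, pos' j ≤ pos (t+1) j := by
    intro j
    by_cases hd : ∃ m, worksel m = some j
    · rw [w3 j hd]; omega
    · rw [w4 j hd]
  refine ⟨?_, ?_⟩
  · intro j hj hlt
    have := posle j
    have := hp j
    have := h1 j (live j hj).1 (by omega)
    omega
  intro m
  -- the new waiting set sits inside the queue, minus the worked job
  have sub : ∀ j ∈ waitSet seq h (pos (t+1)) (st (t+1)) T m,
      j ∈ Q m ∧ worksel m ≠ some j ∧ ¬ (s = 0 ∧ l < (Q m).card) := by
    intro j hj
    simp only [waitSet, Finset.mem_filter, Finset.mem_univ, true_and] at hj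
    obtain ⟨a, b, c, d⟩ := hj
    obtain ⟨e, f⟩ := live j a
    have g1 := posle j
    have g2 := hp j
    have g3 := h1 j e (by omega)
    have g4 : pos (t+1) j = pos' j := by omega
    rw [g4] at b c d
    have hq : j ∈ Q m := (memQ m j).2 ⟨e, b, c, d⟩
    refine ⟨hq, ?_, ?_⟩
    · intro hw
      have := w3 j ⟨m, hw⟩
      omega
    · rintro ⟨x, y⟩
      exact f ⟨x, m, y, hq⟩
  have hQle : s = 0 ∨ (Q m).card + s ≤ l := by
    rcases h2 with h2 | h2
    · exact Or.inl h2
    · right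
      refine le_trans (Nat.add_le_add_right (Finset.card_le_card ?_) s) (h2 m)
      intro j hj
      obtain ⟨a, b, c, d⟩ := (memQ m j).1 hj
      have g2 := hp j
      have g3 := h1 j a (by omega)
      have g4 : pos t j = pos' j := by omega
      simp only [waitSet, Finset.mem_filter, Finset.mem_univ, true_and]
      rw [g4]
      exact ⟨a, b, c, d⟩
  rcases Finset.eq_empty_or_nonempty (waitSet seq h (pos (t+1)) (st (t+1)) T m) with he | ⟨j, hj⟩
  · rw [he]; simp; omega
  · obtain ⟨a, b, c⟩ := sub j hj
    have hpos : 0 < (Q m).card := Finset.card_pos.2 ⟨j, a⟩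
    have hle : (Q m).card + s ≤ l := by
      rcases hQle with h0 | h0
      · have : ¬ l < (Q m).card := fun hh => c ⟨h0, hh⟩
        omega
      · exact h0
    obtain ⟨k, hk⟩ := Option.isSome_iff_exists.1 (w2 m hpos (by omega))
    have hkQ := (w1 m k hk).1
    have : (waitSet seq h (pos (t+1)) (st (t+1)) T m).card < (Q m).card := by
      apply Finset.card_lt_card
      rw [Finset.ssubset_iff_of_subset (fun i hi => (sub i hi).1)]
      exact ⟨k, hkQ, fun hi => (sub k hi).2.1 hk⟩
    omega

theorem large_step {M J : Type*} [Fintype M] [DecidableEq M] [Fintype J]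
    (seq : J → List M) (L l : ℕ) (hl0 : 0 < l) (h : J → Fin L)
    (pos : ℕ → J → ℕ) (st : ℕ → J → Fin 2) (tmax : ℕ)
    (hexec : IsGreedyExec seq l h tmax pos st) (T : ℕ)
    (ht : (T + 1) * l ≤ tmax)
    (h1 : OnTrack seq h (pos (T * l)) (st (T * l)) T) :
    OnTrack seq h (pos ((T + 1) * l)) (st ((T + 1) * l)) (T + 1) := by
  have hT : (T + 1) * l = T * l + l := by ring
  have key : ∀ s, s ≤ l → OnTrack seq h (pos (T * l + s)) (st (T * l + s)) T ∧
      (s = 0 ∨ ∀ m, (waitSet seq h (pos (T * l + s)) (st (T * l + s)) T m).card + s ≤ l) := by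
    intro s
    induction s with
    | zero => intro _; exact ⟨h1, Or.inl rfl⟩
    | succ s ih =>
      intro hs
      obtain ⟨a, b⟩ := ih (by omega)
      obtain ⟨c, d⟩ := step_lemma seq L l h pos st tmax hexec T s (by omega) (by omega) a b
      exact ⟨c, Or.inr d⟩
  obtain ⟨a, b⟩ := key l le_rfl
  rw [hT]
  intro j hj hlt
  have h3 := a j hj hlt
  by_contra hcon
  rcases b with b | b
  · omega
  · have h4 := b ((seq j)[pos (T * l + l) j])
    have h5 : j ∈ waitSet seq h (pos (T * l + l)) (st (T * l + l)) T
        ((seq j)[pos (T * l + l) j]) := by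
      simp only [waitSet, Finset.mem_filter, Finset.mem_univ, true_and]
      exact ⟨hj, hlt, List.getElem?_eq_getElem hlt, by omega⟩
    have := Finset.card_pos.2 ⟨j, h5⟩
    omega

/-- If `L ≥ D(J)`, then in any greedy weak-scheduler execution up to time `2·L·l`, every
job `j` that is live at time `2·L·l` (`st_{2Ll}(j) = 0`) is complete
(`pos_{2Ll}(j) = len(j)`). -/
theorem live_implies_complete {M J : Type*} [Fintype M] [DecidableEq M] [Fintype J]
    (seq : J → List M) (L l : ℕ) (hL0 : 0 < L) (hl0 : 0 < l)
    (hLD : dilation seq ≤ L) (h : J → Fin L)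
    (pos : ℕ → J → ℕ) (st : ℕ → J → Fin 2)
    (hexec : IsGreedyExec seq l h (2 * L * l) pos st)
    (j : J) (hlive : st (2 * L * l) j = 0) :
    pos (2 * L * l) j = (seq j).length := by
  have key : ∀ T, T ≤ 2 * L → OnTrack seq h (pos (T * l)) (st (T * l)) T := by
    intro T
    induction T with
    | zero => intro _ j _ _; omega
    | succ T ih =>
      intro hT
      exact large_step seq L l hl0 h pos st _ hexec T (Nat.mul_le_mul_right l hT) (ih (by omega))
  have h1 := hexec.1 _ le_rfl j
  have h2 : (seq j).length ≤ L :=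
    le_trans (Finset.le_sup (f := fun j : J => (seq j).length) (Finset.mem_univ j)) hLD
  by_contra hne
  have h3 := key (2 * L) le_rfl j hlive (by omega)
  have h4 := (h j).isLt
  omega
end

section
/- Fix a finite machine set M, a job set J over M, positive integers L and l with L ≥ D(J), and a function h : J → {0,…,L−1} that is (L,l)-good for J. Then in any greedy weak-scheduler execution up to time 2·L·l (with any adversary pushes and any choices of which eligible jobs the machines work on), at least half of the jobs are complete at time 2·L·l: |{ j ∈ J : pos_{2Ll}(j) = len(j) }| ≥ |J|/2. -/
open Finset

/-- If `L ≥ D(J)` and `h` is `(L,l)`-good for `J`, then in any greedy weak-scheduler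
execution up to time `2·L·l` (with any adversary pushes and any choices of which eligible
jobs the machines work on), at least half of the jobs are complete at time `2·L·l`. -/
theorem good_hash_half_complete {M J : Type*} [Fintype M] [DecidableEq M] [Fintype J]
    (seq : J → List M) (L l : ℕ) (hL0 : 0 < L) (hl0 : 0 < l)
    (hLD : dilation seq ≤ L) (h : J → Fin L)
    (hgood : IsGoodHash seq L l h)
    (pos : ℕ → J → ℕ) (st : ℕ → J → Fin 2)
    (hexec : IsGreedyExec seq l h (2 * L * l) pos st) :
    (Fintype.card J : ℝ) / 2 ≤
      ((Finset.univ.filter fun j : J =>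
          pos (2 * L * l) j = (seq j).length).card : ℝ) := by
  classical
  obtain ⟨hposle, hst0, hstep⟩ := hexec
  have hlen : ∀ j, (seq j).length ≤ L := fun j =>
    le_trans (Finset.le_sup (f := fun j : J => (seq j).length) (Finset.mem_univ j)) hLD
  choose! P hP W hW1 hW2 hW3 hW4 hW5 hW6 using hstep
  let Q : ℕ → M → Finset J := fun t m =>
      Finset.univ.filter fun j =>
        st t j = 0 ∧ P t j < (seq j).length ∧ (seq j)[P t j]? = some m ∧
          (h j : ℕ) + P t j = t / l
  have hQ : ∀ t m j, j ∈ Q t m ↔ (st t j = 0 ∧ P t j < (seq j).length ∧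
      (seq j)[P t j]? = some m ∧ (h j : ℕ) + P t j = t / l) := by
    intro t m j; simp [Q]
  change ∀ t < 2 * L * l, ∀ m j, W t m = some j → j ∈ Q t m ∧ (Q t m).card ≤ l at hW1
  change ∀ t < 2 * L * l, ∀ m, 0 < (Q t m).card → (Q t m).card ≤ l → (W t m).isSome at hW2
  change ∀ t < 2 * L * l, ∀ j, (t % l = 0 ∧ ∃ m, l < (Q t m).card ∧ j ∈ Q t m) →
    st (t + 1) j = 1 at hW5
  change ∀ t < 2 * L * l, ∀ j, (¬ (t % l = 0 ∧ ∃ m, l < (Q t m).card ∧ j ∈ Q t m)) →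
    st (t + 1) j = st t j at hW6
  clear_value Q
  -- states are monotone
  have hst1 : ∀ t < 2 * L * l, ∀ j, st (t + 1) j = 0 → st t j = 0 := by
    intro t ht j hj
    by_cases hd : t % l = 0 ∧ ∃ m, l < (Q t m).card ∧ j ∈ Q t m
    · have := hW5 t ht j hd
      rw [hj] at this
      exact absurd this (by decide)
    · rw [← hW6 t ht j hd]; exact hj
  have hstm : ∀ t, ∀ s, s ≤ t → t ≤ 2 * L * l → ∀ j, st t j = 0 → st s j = 0 := by
    intro t
    induction t with
    | zero => intro s hs _ j hj; obtain rfl : s = 0 := by omega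
              exact hj
    | succ t ih =>
      intro s hs ht j hj
      rcases Nat.lt_or_ge t s with h1 | h1
      · obtain rfl : s = t + 1 := by omega
        exact hj
      · exact ih s h1 (by omega) j (hst1 t (by omega) j hj)
  have hpm : ∀ t < 2 * L * l, ∀ j, pos t j ≤ P t j ∧ P t j ≤ pos (t + 1) j := by
    intro t ht j
    refine ⟨(hP t ht j).1, ?_⟩
    by_cases hw : ∃ m, W t m = some j
    · rw [hW3 t ht j hw]; omega
    · rw [hW4 t ht j hw]
  -- remaining sets
  have key : ∀ T t, t < 2 * L * l → t / l = T →
      ∀ m, ∀ j, st (t + 1) j = 0 → pos (t + 1) j < (seq j).length →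
        (seq j)[pos (t + 1) j]? = some m → (h j : ℕ) + pos (t + 1) j = T →
        j ∈ Q t m ∧ W t m ≠ some j := by
    intro T t ht hT m j h1 h2 h3 h4
    have hnw : ¬ ∃ m, W t m = some j := by
      intro hw
      have e := hW3 t ht j hw
      obtain ⟨m', hm'⟩ := hw
      have := ((hQ _ _ _).1 (hW1 t ht m' j hm').1).2.2.2
      omega
    have e := hW4 t ht j hnw
    refine ⟨?_, fun hw => hnw ⟨m, hw⟩⟩
    rw [hQ, ← e]
    exact ⟨hst1 t ht j h1, h2, h3, by omega⟩
  let R : ℕ → ℕ → M → Finset J := fun T t m =>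
      Finset.univ.filter fun j =>
        st t j = 0 ∧ pos t j < (seq j).length ∧ (seq j)[pos t j]? = some m ∧
          (h j : ℕ) + pos t j = T
  have hR : ∀ T t m j, j ∈ R T t m ↔ (st t j = 0 ∧ pos t j < (seq j).length ∧
      (seq j)[pos t j]? = some m ∧ (h j : ℕ) + pos t j = T) := by
    intro T t m j; simp [R]
  clear_value R
  have hRQ : ∀ t < 2 * L * l, ∀ m, R (t / l) (t + 1) m ⊆ Q t m := by
    intro t ht m j hj
    rw [hR] at hj
    exact (key _ t ht rfl m j hj.1 hj.2.1 hj.2.2.1 hj.2.2.2).1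
  have hRlt : ∀ t < 2 * L * l, ∀ m, (Q t m).card ≤ l →
      (R (t / l) (t + 1) m).card ≤ (Q t m).card - 1 := by
    intro t ht m hl
    rcases Nat.eq_zero_or_pos (Q t m).card with h0 | h0
    · have := Finset.card_le_card (hRQ t ht m); omega
    · obtain ⟨j, hj⟩ := Option.isSome_iff_exists.1 (hW2 t ht m h0 hl)
      rw [← Finset.card_erase_of_mem (hW1 t ht m j hj).1]
      apply Finset.card_le_card
      intro i hi
      rw [hR] at hi
      have := key _ t ht rfl m i hi.1 hi.2.1 hi.2.2.1 hi.2.2.2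
      rw [Finset.mem_erase]
      refine ⟨?_, this.1⟩
      rintro rfl
      exact this.2 hj
  have hinv : ∀ T, T ≤ 2 * L → ∀ j, st (T * l) j = 0 → pos (T * l) j < (seq j).length →
      T ≤ (h j : ℕ) + pos (T * l) j := by
    intro T
    induction T with
    | zero => intros; omega
    | succ T ih =>
      intro hT
      have hTl : T * l + l ≤ 2 * L * l := by
        calc T * l + l = (T + 1) * l := by ring
          _ ≤ _ := Nat.mul_le_mul_right l hT
      have hdiv : ∀ s, s < l → (T * l + s) / l = T := by
        intro s hs
        rw [mul_comm, Nat.mul_add_div hl0, Nat.div_eq_of_lt hs, add_zero]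
      have inner : ∀ s, s ≤ l → (∀ j, st (T * l + s) j = 0 →
          pos (T * l + s) j < (seq j).length → T ≤ (h j : ℕ) + pos (T * l + s) j) ∧
          (0 < s → ∀ m, (R T (T * l + s) m).card ≤ l - s) := by
        intro s
        induction s with
        | zero => intro _; exact ⟨by simpa using ih (by omega), by omega⟩
        | succ s ihs =>
          intro hs
          obtain ⟨i1, i2⟩ := ihs (by omega)
          have ht : T * l + s < 2 * L * l := by omega
          have hd := hdiv s (by omega)
          rw [← add_assoc]
          generalize htt : T * l + s = t at *
          refine ⟨?_, ?_⟩
          · intro j h1 h2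
            have := hpm t ht j
            have := i1 j (hst1 t ht j h1) (by omega)
            omega
          · intro _ m
            have hQR : Q t m ⊆ R T t m := by
              intro j hj
              rw [hQ] at hj
              obtain ⟨a, b, c, d⟩ := hj
              have := hpm t ht j
              have := i1 j a (by omega)
              have e : P t j = pos t j := by omega
              rw [e] at b c d
              rw [hR]
              exact ⟨a, b, c, by omega⟩
            have h3 := hRlt t ht m
            rw [hd] at h3
            rcases Nat.eq_zero_or_pos s with h0 | h0
            · by_cases hc : (Q t m).card ≤ l
              · have := h3 hc; omega
              · have : R T (t + 1) m = ∅ := by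
                  rw [Finset.eq_empty_iff_forall_notMem]
                  intro j hj
                  have hq := hRQ t ht m
                  rw [hd] at hq
                  have h5 := hW5 t ht j ⟨by rw [← htt, h0]; simp, m, by omega, hq hj⟩
                  rw [((hR _ _ _ _).1 hj).1] at h5
                  exact absurd h5 (by decide)
                rw [this]; simp
            · have h6 := i2 h0 m
              have h7 := Finset.card_le_card hQR
              have := h3 (by omega)
              omega
      obtain ⟨i1, i2⟩ := inner l le_rfl
      rw [show (T + 1) * l = T * l + l by ring]
      intro j h1 h2
      have h3 := i1 j h1 h2
      rcases Nat.lt_or_ge T ((h j : ℕ) + pos (T * l + l) j) with h4 | h4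
      · exact h4
      · exfalso
        have h5 := i2 hl0 ((seq j)[pos (T * l + l) j])
        have h6 : j ∈ R T (T * l + l) ((seq j)[pos (T * l + l) j]) := by
          rw [hR]; exact ⟨h1, h2, List.getElem?_eq_getElem h2, by omega⟩
        have := Finset.card_pos.2 ⟨j, h6⟩
        omega
  have hinc : ∀ j, pos (2 * L * l) j ≠ (seq j).length → st (2 * L * l) j ≠ 0 := by
    intro j hj h0
    have h1 := hposle _ le_rfl j
    have h2 := hinv (2 * L) le_rfl j h0 (by omega)
    have := hlen j
    have := (h j).2
    omega
  have hdrop : ∀ t ≤ 2 * L * l, ∀ j, st t j ≠ 0 →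
      ∃ s < t, s % l = 0 ∧ ∃ m, l < (Q s m).card ∧ j ∈ Q s m := by
    intro t
    induction t with
    | zero => intro _ j hj; exact absurd (hst0 j) hj
    | succ t ih =>
      intro ht j hj
      by_cases hd : t % l = 0 ∧ ∃ m, l < (Q t m).card ∧ j ∈ Q t m
      · exact ⟨t, by omega, hd⟩
      · rw [hW6 t (by omega) j hd] at hj
        obtain ⟨s, hs, hh⟩ := ih (by omega) j hj
        exact ⟨s, by omega, hh⟩
  let B : Fin (2 * L) → M → Finset (J × ℕ) := fun T m =>
    if l < (Q (T * l) m).card then (Q (T * l) m).image (fun j => (j, P (T * l) j)) else ∅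
  have hB : ∀ T m p, p ∈ B T m ↔ l < (Q (T * l) m).card ∧ p.1 ∈ Q (T * l) m ∧
      p.2 = P (T * l) p.1 := by
    rintro T m ⟨a, b⟩
    by_cases hc : l < (Q (T * l) m).card
    · simp only [B, hc, if_true, Finset.mem_image, Prod.mk.injEq, true_and]
      constructor
      · rintro ⟨j, hj, rfl, rfl⟩; exact ⟨hj, rfl⟩
      · rintro ⟨hj, e⟩; exact ⟨a, hj, rfl, e.symm⟩
    · simp [B, hc]
  have hTlt : ∀ T : Fin (2 * L), (T : ℕ) * l < 2 * L * l := fun T =>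
    Nat.mul_lt_mul_of_pos_right T.2 hl0
  have hexcl : ∀ (T T' : Fin (2 * L)) m m' j, l < (Q (T * l) m).card → j ∈ Q (T * l) m →
      j ∈ Q (T' * l) m' → ¬ T < T' := by
    intro T T' m m' j hc hj hj' hlt
    have h1 := hW5 (T * l) (hTlt T) j ⟨by simp, m, hc, hj⟩
    have h2 : (T : ℕ) * l < T' * l := Nat.mul_lt_mul_of_pos_right hlt hl0
    have h3 := hstm (T' * l) (T * l + 1) h2 (hTlt T').le j ((hQ _ _ _).1 hj').1
    rw [h1] at h3
    exact absurd h3 (by decide)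
  have hocc : PatternOccurs B h := by
    intro T m p hp
    rw [hB, hQ] at hp
    obtain ⟨_, ⟨_, _, _, e⟩, e2⟩ := hp
    rw [e2, e, Nat.mul_div_cancel _ hl0]
  have hnb : ¬ IsBadPattern seq L l B := fun hb => hgood B hb hocc
  have hcard : ∑ T, ∑ m, (B T m).card * 2 ≤ Fintype.card J := by
    by_contra hcon
    apply hnb
    refine ⟨?_, ?_, ?_, ?_⟩
    · intro T m p hp
      rw [hB, hQ] at hp
      obtain ⟨_, ⟨_, _, e, _⟩, e2⟩ := hp
      rw [e2]; exact e
    · rintro T m T' m' ⟨a, b⟩ hp ⟨a', b'⟩ hp' e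
      obtain rfl : a = a' := e
      rw [hB] at hp hp'
      obtain ⟨c1, c2, c3⟩ := hp
      obtain ⟨d1, d2, d3⟩ := hp'
      obtain rfl : T = T' := le_antisymm
        (not_lt.1 (hexcl T' T m' m a d1 d2 c2)) (not_lt.1 (hexcl T T' m m' a c1 c2 d2))
      refine ⟨rfl, ?_, ?_⟩
      · have x := ((hQ _ _ _).1 c2).2.2.1
        have y := ((hQ _ _ _).1 d2).2.2.1
        exact Option.some.inj (x.symm.trans y)
      · exact Prod.ext rfl (c3.trans d3.symm)
    · intro T m
      by_cases hc : l < (Q (T * l) m).card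
      · right
        simp only [B, hc, if_true]
        rw [Finset.card_image_of_injective _ (fun a b e => (Prod.mk.inj e).1)]
        exact hc
      · left; simp [B, hc]
    · rw [not_le] at hcon
      simp only [← Finset.sum_mul] at hcon
      omega
  simp only [← Finset.sum_mul] at hcard
  have hsub : (Finset.univ.filter fun j : J => ¬ pos (2 * L * l) j = (seq j).length) ⊆
      Finset.univ.biUnion fun T => Finset.univ.biUnion fun m => (B T m).image Prod.fst := by
    intro j hj
    rw [Finset.mem_filter] at hj
    obtain ⟨s, hs, hs0, m, hc, hm⟩ := hdrop _ le_rfl j (hinc j hj.2)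
    obtain ⟨T, rfl⟩ := Nat.dvd_of_mod_eq_zero hs0
    rw [mul_comm l T] at hs hc hm
    have hT : T < 2 * L := Nat.lt_of_mul_lt_mul_right hs
    simp only [Finset.mem_biUnion, Finset.mem_univ, true_and, Finset.mem_image]
    exact ⟨⟨T, hT⟩, m, (j, P (T * l) j), (hB _ _ _).2 ⟨hc, hm, rfl⟩, rfl⟩
  have hle : (Finset.univ.filter fun j : J => ¬ pos (2 * L * l) j = (seq j).length).card ≤
      ∑ T, ∑ m, (B T m).card := by
    refine (Finset.card_le_card hsub).trans (Finset.card_biUnion_le.trans ?_)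
    refine Finset.sum_le_sum fun T _ => Finset.card_biUnion_le.trans ?_
    exact Finset.sum_le_sum fun m _ => Finset.card_image_le
  have htot := Finset.card_filter_add_card_filter_not (s := (Finset.univ : Finset J))
    (fun j : J => pos (2 * L * l) j = (seq j).length)
  rw [Finset.card_univ] at htot
  have hfin : Fintype.card J ≤ 2 *
      (Finset.univ.filter fun j : J => pos (2 * L * l) j = (seq j).length).card := by omega
  have : (Fintype.card J : ℝ) ≤ 2 * ((Finset.univ.filter fun j : J =>
      pos (2 * L * l) j = (seq j).length).card : ℝ) := by exact_mod_cast hfin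
  linarith
end

section
/- Fix a finite machine set M, a job set J over M, positive integers L and l with L ≥ D(J), and a function h : J → {0,…,L−1} that is (L,l)-good for J. Then in any stateless weak-scheduler execution up to time 2·L·l, starting from arbitrary initial positions and with any choices of which eligible jobs the machines work on, at least half of the jobs are complete at time 2·L·l: |{ j ∈ J : pos_{2Ll}(j) = len(j) }| ≥ |J|/2. -/
open Finset

/-- A stateless weak-scheduler execution up to time `tmax`, for the job set given by the
finite type `J` with machine sequences `seq : J → List M`, small time step count `l`, and
hash function `h : J → Fin L`. `pos t j` is the position of job `j` at time `t`; the
initial positions `pos 0` are arbitrary. At each step `t → t+1`, with `T := ⌊t/l⌋` and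
`Q m := { j : pos t j < len j, seq(j)_{pos t j} = m, h j + pos t j = T }`: if
`0 < |Q m| ≤ l` then exactly one job of `Q m` advances; every other job keeps its
position. -/
def IsStatelessExec {M J : Type*} [Fintype M] [DecidableEq M] [Fintype J]
    (seq : J → List M) {L : ℕ} (l : ℕ) (h : J → Fin L) (tmax : ℕ)
    (pos : ℕ → J → ℕ) : Prop :=
  (∀ t ≤ tmax, ∀ j, pos t j ≤ (seq j).length) ∧
  (∀ t < tmax,
    let Q : M → Finset J := fun m =>
      Finset.univ.filter fun j =>
        pos t j < (seq j).length ∧ (seq j)[pos t j]? = some m ∧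
          (h j : ℕ) + pos t j = t / l
    ∃ worksel : M → Option J,
      (∀ m j, worksel m = some j → j ∈ Q m ∧ (Q m).card ≤ l) ∧
      (∀ m, 0 < (Q m).card → (Q m).card ≤ l → (worksel m).isSome) ∧
      (∀ j, (∃ m, worksel m = some j) → pos (t + 1) j = pos t j + 1) ∧
      (∀ j, (¬ ∃ m, worksel m = some j) → pos (t + 1) j = pos t j))

def QS {M J : Type*} [DecidableEq M] [Fintype J] (seq : J → List M) {L : ℕ}
    (h : J → Fin L) (pos : ℕ → J → ℕ) (t T : ℕ) (m : M) : Finset J :=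
  Finset.univ.filter fun j =>
    pos t j < (seq j).length ∧ (seq j)[pos t j]? = some m ∧ (h j : ℕ) + pos t j = T

theorem QS_step {M J : Type*} [Fintype M] [DecidableEq M] [Fintype J]
    (seq : J → List M) {L l : ℕ} (hl0 : 0 < l) (h : J → Fin L) (tmax : ℕ)
    (pos : ℕ → J → ℕ) (hexec : IsStatelessExec seq l h tmax pos)
    (t T : ℕ) (m : M) (ht : t < tmax) (hT : T ≤ t / l) :
    QS seq h pos (t+1) T m ⊆ QS seq h pos t T m ∧
    (l < (QS seq h pos t T m).card → QS seq h pos t T m ⊆ QS seq h pos (t+1) T m) ∧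
    (t / l = T → 0 < (QS seq h pos t T m).card → (QS seq h pos t T m).card ≤ l →
      (QS seq h pos (t+1) T m).card < (QS seq h pos t T m).card) := by
  obtain ⟨w, h1, h2, h3, h4⟩ := hexec.2 t ht
  have hA : QS seq h pos (t+1) T m ⊆ QS seq h pos t T m := by
    intro j hj
    by_cases hw : ∃ m, w m = some j
    · have e := h3 j hw
      obtain ⟨m', hm'⟩ := hw
      have := (h1 m' j hm').1
      simp only [QS, mem_filter, mem_univ, true_and] at hj this
      omega
    · have e := h4 j hw
      simpa only [QS, mem_filter, mem_univ, true_and, e] using hj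
  refine ⟨hA, ?_, ?_⟩
  · intro hc j hj
    by_cases hw : ∃ m, w m = some j
    · exfalso
      obtain ⟨m', hm'⟩ := hw
      have hq := h1 m' j hm'
      obtain ⟨ha, hb⟩ := hq
      simp only [QS, mem_filter, mem_univ, true_and] at hj ha
      have e1 : m = m' := by
        have := hj.2.1.symm.trans ha.2.1
        simpa using this
      have e2 : T = t / l := by omega
      subst e1
      subst e2
      exact absurd hb (not_le.mpr hc)
    · have e := h4 j hw
      simpa only [QS, mem_filter, mem_univ, true_and, e] using hj
  · intro e hp hc
    subst e
    have hs := h2 m hp hc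
    obtain ⟨j, hj⟩ := Option.isSome_iff_exists.1 hs
    have hq := (h1 m j hj).1
    have e := h3 j ⟨m, hj⟩
    apply Finset.card_lt_card
    refine ⟨hA, fun hsub => ?_⟩
    have := hsub hq
    simp only [QS, mem_filter, mem_univ, true_and] at this hq
    omega

theorem QS_final {M J : Type*} [Fintype M] [DecidableEq M] [Fintype J]
    (seq : J → List M) {L l : ℕ} (hl0 : 0 < l) (h : J → Fin L) (tmax : ℕ)
    (pos : ℕ → J → ℕ) (hexec : IsStatelessExec seq l h tmax pos)
    (T : ℕ) (m : M) (hT : (T + 1) * l ≤ tmax) :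
    QS seq h pos tmax T m = ∅ ∨ l < (QS seq h pos tmax T m).card := by
  have hTl : (T + 1) * l = T * l + l := by ring
  by_cases hc : l < (QS seq h pos (T * l) T m).card
  · right
    have : ∀ t, T * l ≤ t → t ≤ tmax → l < (QS seq h pos t T m).card := by
      intro t ht
      induction t, ht using Nat.le_induction with
      | base => intro _; exact hc
      | succ t ht ih =>
        intro h'
        have ih := ih (by omega)
        have := (QS_step seq hl0 h tmax pos hexec t T m (by omega)
          ((Nat.le_div_iff_mul_le hl0).2 ht)).2.1 ih
        exact lt_of_lt_of_le ih (Finset.card_le_card this)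
    exact this tmax (by omega) le_rfl
  · left
    have hs : ∀ s, s ≤ l → (QS seq h pos (T * l + s) T m).card ≤ l - s := by
      intro s
      induction s with
      | zero => intro _; simpa using hc
      | succ s ih =>
        intro hs
        have ih := ih (by omega)
        have hd : (T * l + s) / l = T := by
          rw [mul_comm, Nat.mul_add_div hl0, Nat.div_eq_of_lt (by omega), add_zero]
        have st := QS_step seq hl0 h tmax pos hexec (T * l + s) T m (by omega) hd.ge
        have c1 := Finset.card_le_card st.1
        rw [← add_assoc]
        by_cases h0 : 0 < (QS seq h pos (T * l + s) T m).card
        · have := st.2.2 hd h0 (by omega)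
          omega
        · omega
    have : ∀ t, T * l + l ≤ t → t ≤ tmax → (QS seq h pos t T m).card = 0 := by
      intro t ht
      induction t, ht using Nat.le_induction with
      | base => intro _; have := hs l le_rfl; omega
      | succ t ht ih =>
        intro h'
        have ih := ih (by omega)
        have := Finset.card_le_card (QS_step seq hl0 h tmax pos hexec t T m (by omega)
          ((Nat.le_div_iff_mul_le hl0).2 (by omega))).1
        omega
    exact Finset.card_eq_zero.1 (this tmax (by omega) le_rfl)

/-- If `L ≥ D(J)` and `h` is `(L,l)`-good for `J`, then in any stateless weak-scheduler
execution up to time `2·L·l`, starting from arbitrary initial positions and with any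
choices of which eligible jobs the machines work on, at least half of the jobs are
complete at time `2·L·l`. -/
theorem good_hash_half_complete_stateless {M J : Type*} [Fintype M] [DecidableEq M]
    [Fintype J] (seq : J → List M) (L l : ℕ) (hL0 : 0 < L) (hl0 : 0 < l)
    (hLD : dilation seq ≤ L) (h : J → Fin L)
    (hgood : IsGoodHash seq L l h)
    (pos : ℕ → J → ℕ)
    (hexec : IsStatelessExec seq l h (2 * L * l) pos) :
    (Fintype.card J : ℝ) / 2 ≤
      ((Finset.univ.filter fun j : J =>
          pos (2 * L * l) j = (seq j).length).card : ℝ) := by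
  classical
  set N := 2 * L * l with hN
  let B : Fin (2 * L) → M → Finset (J × ℕ) := fun T m =>
    (QS seq h pos N T m).image fun j => (j, pos N j)
  have hBc : ∀ T m, (B T m).card = (QS seq h pos N T m).card := by
    intro T m
    apply Finset.card_image_of_injective
    intro a b hab
    exact (Prod.ext_iff.1 hab).1
  have hB : ∀ T m, ∀ p ∈ B T m, (seq p.1)[p.2]? = some m ∧ (h p.1 : ℕ) + p.2 = T ∧
      p.2 = pos N p.1 := by
    intro T m p hp
    obtain ⟨j, hj, rfl⟩ := Finset.mem_image.1 hp
    simp only [QS, mem_filter, mem_univ, true_and] at hj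
    exact ⟨hj.2.1, hj.2.2, rfl⟩
  have hocc : PatternOccurs B h := fun T m p hp => (hB T m p hp).2.1
  have hsum : ¬ (Fintype.card J < 2 * ∑ T, ∑ m, (B T m).card) := by
    intro hlt
    refine hgood B ⟨fun T m p hp => (hB T m p hp).1, ?_, ?_, hlt⟩ hocc
    · intro T m T' m' p hp p' hp' e
      obtain ⟨a1, a2, a3⟩ := hB T m p hp
      obtain ⟨b1, b2, b3⟩ := hB T' m' p' hp'
      have e2 : p = p' := Prod.ext e (by rw [a3, b3, e])
      subst e2
      refine ⟨Fin.ext (by omega), ?_, rfl⟩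
      simpa using a1.symm.trans b1
    · intro T m
      rcases QS_final seq hl0 h N pos hexec T m (Nat.mul_le_mul_right l T.2) with h0 | h0
      · left; simp only [B, h0, Finset.image_empty]
      · right; rw [hBc]; exact h0
  have hinc : (Finset.univ.filter fun j : J => ¬ pos N j = (seq j).length).card ≤
      ∑ T, ∑ m, (B T m).card := by
    simp only [hBc]
    calc _ ≤ ((Finset.univ : Finset (Fin (2 * L))).biUnion fun T =>
          (Finset.univ : Finset M).biUnion fun m => QS seq h pos N T m).card := by
          apply Finset.card_le_card
          intro j hj
          have hj := (Finset.mem_filter.1 hj).2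
          have hle := hexec.1 N le_rfl j
          have hlt : pos N j < (seq j).length := by omega
          have hD : (seq j).length ≤ L :=
            le_trans (Finset.le_sup (f := fun j : J => (seq j).length) (mem_univ j)) hLD
          have hh := (h j).2
          simp only [mem_biUnion, mem_univ, true_and]
          refine ⟨⟨h j + pos N j, by omega⟩, (seq j)[pos N j], ?_⟩
          simp [QS, hlt]
      _ ≤ _ := Finset.card_biUnion_le.trans
          (Finset.sum_le_sum fun T _ => Finset.card_biUnion_le)
  have htot := Finset.card_filter_add_card_filter_not (s := (Finset.univ : Finset J))
    (fun j : J => pos N j = (seq j).length)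
  rw [Finset.card_univ] at htot
  have hfin : Fintype.card J ≤
      2 * (Finset.univ.filter fun j : J => pos N j = (seq j).length).card := by omega
  have hR : (Fintype.card J : ℝ) ≤
      2 * ((Finset.univ.filter fun j : J => pos N j = (seq j).length).card : ℝ) := by
    exact_mod_cast hfin
  have : (Fintype.card J : ℝ) / 2 ≤
      ((Finset.univ.filter fun j : J => pos N j = (seq j).length).card : ℝ) := by linarith
  convert this
end
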